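/- arXiv:1312.3679 — 2 statements merged into one kernel-verified Lean document; each statement's English description precedes it below -/
import Mathlib

section
/- Every simple x-monotone drawing of the complete graph K_n has at least Z(n) crossings; hence the monotone crossing number of K_n equals Z(n) (together with the matching upper bound). -/
/-- `Zval n` is Hill's conjectured value
`Z(n) = (1/4)⌊n/2⌋⌊(n−1)/2⌋⌊(n−2)/2⌋⌊(n−3)/2⌋` for the crossing number of `K n`.
(The product of the four floors is always divisible by 4, so natural division is exact.) -/
def Zval (n : ℕ) : ℕ :=
  n / 2 * ((n - 1) / 2) * ((n - 2) / 2) * ((n - 3) / 2) / 4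

/-- An x-monotone drawing of the complete graph `K n`: vertices `v i = (x i, 0)` with
`x` strictly increasing, and for each pair `i < j` a continuous function `e i j` on
`[x i, x j]` vanishing at the endpoints, whose graph is the arc of the edge `{i, j}`.
Edges avoid the intermediate vertices, any two distinct edges meet in finitely many
interior parameters, and at each such common point the difference changes sign
(a proper crossing). -/
structure XMonotoneDrawing (n : ℕ) where
  x : Fin n → ℝ
  x_strictMono : StrictMono x
  e : Fin n → Fin n → ℝ → ℝ
  cont : ∀ i j : Fin n, i < j → ContinuousOn (e i j) (Set.Icc (x i) (x j))
  end_left : ∀ i j : Fin n, i < j → e i j (x i) = 0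
  end_right : ∀ i j : Fin n, i < j → e i j (x j) = 0
  avoid_vertex : ∀ i m j : Fin n, i < m → m < j → e i j (x m) ≠ 0
  cross_finite : ∀ i j k l : Fin n, i < j → k < l → (i, j) ≠ (k, l) →
    {t : ℝ | max (x i) (x k) < t ∧ t < min (x j) (x l) ∧ e i j t = e k l t}.Finite
  sign_change : ∀ i j k l : Fin n, i < j → k < l → (i, j) ≠ (k, l) →
    ∀ t : ℝ, max (x i) (x k) < t → t < min (x j) (x l) → e i j t = e k l t →
      ∃ ε > (0 : ℝ), ∀ s : ℝ, max (x i) (x k) < s → t - ε < s → s < t →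
        ∀ u : ℝ, u < min (x j) (x l) → t < u → u < t + ε →
          (e i j s - e k l s) * (e i j u - e k l u) < 0

namespace XMonotoneDrawing

variable {n : ℕ}

/-- The set of parameters at which the edges `{i,j}` and `{k,l}` cross
(both edges are parametrized over the `x`-axis). -/
def crossSet (D : XMonotoneDrawing n) (i j k l : Fin n) : Set ℝ :=
  {t : ℝ | max (D.x i) (D.x k) < t ∧ t < min (D.x j) (D.x l) ∧ D.e i j t = D.e k l t}

/-- The number of crossings between the edges `{i,j}` and `{k,l}`. -/
noncomputable def crossCount (D : XMonotoneDrawing n) (i j k l : Fin n) : ℕ :=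
  (D.crossSet i j k l).ncard

/-- Two edges `{i,j}` and `{k,l}` are adjacent if they share an endpoint index. -/
def Adj (i j k l : Fin n) : Prop := i = k ∨ i = l ∨ j = k ∨ j = l

/-- A drawing is semisimple if no two adjacent edges cross. -/
def Semisimple (D : XMonotoneDrawing n) : Prop :=
  ∀ i j k l : Fin n, i < j → k < l → (i, j) ≠ (k, l) → Adj i j k l →
    D.crossCount i j k l = 0

/-- A drawing is weakly semisimple if every two adjacent edges cross an even
number of times. -/
def WeaklySemisimple (D : XMonotoneDrawing n) : Prop :=
  ∀ i j k l : Fin n, i < j → k < l → (i, j) ≠ (k, l) → Adj i j k l →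
    Even (D.crossCount i j k l)

/-- A drawing is simple if no two adjacent edges cross and every two non-adjacent
edges cross at most once. -/
def Simple (D : XMonotoneDrawing n) : Prop :=
  ∀ i j k l : Fin n, i < j → k < l → (i, j) ≠ (k, l) →
    (Adj i j k l → D.crossCount i j k l = 0) ∧
    (¬ Adj i j k l → D.crossCount i j k l ≤ 1)

/-- `cr D`: the total number of crossings of `D`. (Each unordered pair of distinct
edges is counted twice in the sum, whence the division by 2; `crossCount` is
symmetric in the two edges.) -/
noncomputable def cr (D : XMonotoneDrawing n) : ℕ :=
  (∑ p : (Fin n × Fin n) × (Fin n × Fin n),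
      if p.1.1 < p.1.2 ∧ p.2.1 < p.2.2 ∧ p.1 ≠ p.2 then
        D.crossCount p.1.1 p.1.2 p.2.1 p.2.2
      else 0) / 2

/-- `ocr D`: the number of unordered pairs of edges of `D` crossing an odd number
of times. (Each unordered pair appears twice as an ordered pair.) -/
noncomputable def ocr (D : XMonotoneDrawing n) : ℕ :=
  {p : (Fin n × Fin n) × (Fin n × Fin n) |
    p.1.1 < p.1.2 ∧ p.2.1 < p.2.2 ∧ p.1 ≠ p.2 ∧
      Odd (D.crossCount p.1.1 p.1.2 p.2.1 p.2.2)}.ncard / 2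

/-- The signature of the triple `i < j < k`: `true` (i.e. `+`) if the vertex `v j`
lies below the edge `{i, k}`, i.e. `e i k (x j) > 0`, and `false` (i.e. `−`) otherwise. -/
noncomputable def sig (D : XMonotoneDrawing n) (i j k : Fin n) : Bool :=
  if 0 < D.e i k (D.x j) then true else false

/-- `D` realizes the signature function `σ` if `σ_D` and `σ` agree on all
increasing triples. -/
def Realizes (D : XMonotoneDrawing n) (σ : Fin n → Fin n → Fin n → Bool) : Prop :=
  ∀ i j k : Fin n, i < j → j < k → D.sig i j k = σ i j k

/-- A drawing is pseudolinear if its edges extend to continuous curves over all of `ℝ`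
that avoid all vertices other than their endpoints and such that any two of these
extended curves cross exactly once (the crossing being a sign change of the difference). -/
def Pseudolinear (D : XMonotoneDrawing n) : Prop :=
  ∃ p : Fin n → Fin n → ℝ → ℝ,
    (∀ i j : Fin n, i < j → Continuous (p i j)) ∧
    (∀ i j : Fin n, i < j → ∀ t ∈ Set.Icc (D.x i) (D.x j), p i j t = D.e i j t) ∧
    (∀ i j m : Fin n, i < j → m ≠ i → m ≠ j → p i j (D.x m) ≠ 0) ∧
    (∀ i j k l : Fin n, i < j → k < l → (i, j) ≠ (k, l) →
      ∃ t : ℝ, p i j t = p k l t ∧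
        ∀ s u : ℝ, s < t → t < u →
          (p i j s - p k l s) * (p i j u - p k l u) < 0)

/-- The arc of the edge `{i, j}` as a subset of the plane `ℝ × ℝ`. -/
def edgeArc (D : XMonotoneDrawing n) (i j : Fin n) : Set (ℝ × ℝ) :=
  {q : ℝ × ℝ | D.x i ≤ q.1 ∧ q.1 ≤ D.x j ∧ q.2 = D.e i j q.1}

/-- The union of all edge arcs of the drawing. -/
def arcUnion (D : XMonotoneDrawing n) : Set (ℝ × ℝ) :=
  ⋃ i : Fin n, ⋃ j : Fin n, ⋃ (_ : i < j), D.edgeArc i j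

end XMonotoneDrawing

namespace Sig

variable {n : ℕ}

/-- With respect to a signature function `σ`, the vertex `m ∉ {i, j}` is on the left of
the directed edge `(i, j)` (where `i < j`). -/
def LeftOf (σ : Fin n → Fin n → Fin n → Bool) (i j m : Fin n) : Prop :=
  (i < m ∧ m < j ∧ σ i m j = false) ∨ (m < i ∧ σ m i j = true) ∨ (j < m ∧ σ i j m = true)

/-- The number of vertices on the left of the directed edge `(i, j)`. -/
noncomputable def leftCount (σ : Fin n → Fin n → Fin n → Bool) (i j : Fin n) : ℕ :=
  {m : Fin n | LeftOf σ i j m}.ncard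

/-- The edge `{i, j}` (with `i < j`) is a `k`-edge of `σ` if `min(ℓ, n − 2 − ℓ) = k`,
where `ℓ` is the number of vertices on its left. -/
def IsKEdge (σ : Fin n → Fin n → Fin n → Bool) (k : ℕ) (i j : Fin n) : Prop :=
  min (leftCount σ i j) (n - 2 - leftCount σ i j) = k

/-- `Ek σ k`: the number of `k`-edges of `σ`. -/
noncomputable def Ek (σ : Fin n → Fin n → Fin n → Bool) (k : ℕ) : ℕ :=
  {p : Fin n × Fin n | p.1 < p.2 ∧ IsKEdge σ k p.1 p.2}.ncard

/-- `Ele σ k = E_{≤k}(σ)`: the number of `≤k`-edges of `σ`. -/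
noncomputable def Ele (σ : Fin n → Fin n → Fin n → Bool) (k : ℕ) : ℕ :=
  ∑ i ∈ Finset.range (k + 1), Ek σ i

/-- `Elele σ k = E_{≤≤k}(σ) = Σ_{j=0}^{k} E_{≤j}(σ)`. -/
noncomputable def Elele (σ : Fin n → Fin n → Fin n → Bool) (k : ℕ) : ℕ :=
  ∑ j ∈ Finset.range (k + 1), Ele σ j

/-- `E_{≤≤k}` with an integer index, which vanishes for negative `k`. -/
noncomputable def ElelZ (σ : Fin n → Fin n → Fin n → Bool) (k : ℤ) : ℕ :=
  if 0 ≤ k then Elele σ k.toNat else 0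

/-- The left count of the edge `{i, j}` in the drawing restricted to the first
`n − 1` vertices (the last vertex deleted). -/
noncomputable def leftCountRes (σ : Fin n → Fin n → Fin n → Bool) (i j : Fin n) : ℕ :=
  {m : Fin n | LeftOf σ i j m ∧ (m : ℕ) + 1 < n}.ncard

/-- The edge `{i, j}` is a `k`-edge of the restriction of `σ` to the first `n − 1`
vertices (there `min(ℓ', (n−1) − 2 − ℓ') = k`). -/
def IsKEdgeRes (σ : Fin n → Fin n → Fin n → Bool) (k : ℕ) (i j : Fin n) : Prop :=
  min (leftCountRes σ i j) (n - 3 - leftCountRes σ i j) = k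

/-- The edge `{i, j}` is a `(D,D')`-invariant `≤k`-edge: it avoids the last vertex and
is an `m`-edge with `m ≤ k` both in `σ` and in the restriction of `σ` to the first
`n − 1` vertices. -/
def InvariantLeK (σ : Fin n → Fin n → Fin n → Bool) (k : ℕ) (i j : Fin n) : Prop :=
  (j : ℕ) + 1 < n ∧ (∃ m ≤ k, IsKEdge σ m i j) ∧ (∃ m ≤ k, IsKEdgeRes σ m i j)

/-- The ten 4-tuple forms allowed in signature functions of semisimple x-monotone
drawings: `++++, −−−−, ++−−, −−++, −++−, +−−+, −−−+, +++−, +−−−, −+++`. -/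
def AllowedForm (a b c d : Bool) : Prop :=
  (a, b, c, d) ∈ ([(true, true, true, true), (false, false, false, false),
    (true, true, false, false), (false, false, true, true),
    (false, true, true, false), (true, false, false, true),
    (false, false, false, true), (true, true, true, false),
    (true, false, false, false), (false, true, true, true)] :
      List (Bool × Bool × Bool × Bool))

/-- A signature function is admissible if every increasing 4-tuple is of one of the
ten allowed forms. -/
def Admissible (σ : Fin n → Fin n → Fin n → Bool) : Prop :=
  ∀ a b c d : Fin n, a < b → b < c → c < d →
    AllowedForm (σ a b c) (σ a b d) (σ a c d) (σ b c d)

/-- The six convex forms: `++++, −−−−, ++−−, −−++, −++−, +−−+`. -/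
def ConvexForm (a b c d : Bool) : Prop :=
  (a, b, c, d) ∈ ([(true, true, true, true), (false, false, false, false),
    (true, true, false, false), (false, false, true, true),
    (false, true, true, false), (true, false, false, true)] :
      List (Bool × Bool × Bool × Bool))

/-- The 4-tuple `a < b < c < d` is convex in `σ`. -/
def Convex4 (σ : Fin n → Fin n → Fin n → Bool) (a b c d : Fin n) : Prop :=
  ConvexForm (σ a b c) (σ a b d) (σ a c d) (σ b c d)

/-- The eight 4-tuple forms of pseudolinear x-monotone drawings (the sign-monotone
sequences): `++++, +++−, ++−−, +−−−, −−−−, −−−+, −−++, −+++`. -/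
def PLForm (a b c d : Bool) : Prop :=
  (a, b, c, d) ∈ ([(true, true, true, true), (true, true, true, false),
    (true, true, false, false), (true, false, false, false),
    (false, false, false, false), (false, false, false, true),
    (false, false, true, true), (false, true, true, true)] :
      List (Bool × Bool × Bool × Bool))

/-- The relation `j ⋖ k` on `{j : i < j}`: `j ⋖ k` iff (`j < k` and `σ i j k = +`)
or (`k < j` and `σ i k j = −`). -/
def Below (σ : Fin n → Fin n → Fin n → Bool) (i j k : Fin n) : Prop :=
  (j < k ∧ σ i j k = true) ∨ (k < j ∧ σ i k j = false)

end Sig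

open Finset

namespace MonotoneKn

/-- Sum of `F a b c d` over all `a < b < c < d < n`. -/
def quadSum (n : ℕ) (F : ℕ → ℕ → ℕ → ℕ → ℤ) : ℤ :=
  ∑ a ∈ range n, ∑ b ∈ range n, ∑ c ∈ range n, ∑ d ∈ range n,
    if a < b ∧ b < c ∧ c < d then F a b c d else 0

/-- Sum of `F i j` over all `i < j < n`. -/
def pairSum (n : ℕ) (F : ℕ → ℕ → ℤ) : ℤ :=
  ∑ i ∈ range n, ∑ j ∈ range n, if i < j then F i j else 0

/-- The number of independent pairs of edges of the `K₄` on `a < b < c < d` which the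
signature `σ` forces to cross an odd number of times. -/
def oddPairs (σ : ℕ → ℕ → ℕ → Bool) (a b c d : ℕ) : ℤ :=
  (if σ a b c = σ b c d then 1 else 0) + (if σ a b d ≠ σ a c d then 1 else 0)

/-- The vertex `m` lies to the left of the directed edge `(i, j)`, where `i < j`. -/
def IsLeft (σ : ℕ → ℕ → ℕ → Bool) (i j m : ℕ) : Prop :=
  (i < m ∧ m < j ∧ σ i m j = false) ∨ (m < i ∧ σ m i j = true) ∨ (j < m ∧ σ i j m = true)

/-- The vertex `m` lies to the right of the directed edge `(i, j)`, where `i < j`. -/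
def IsRight (σ : ℕ → ℕ → ℕ → Bool) (i j m : ℕ) : Prop :=
  (i < m ∧ m < j ∧ σ i m j = true) ∨ (m < i ∧ σ m i j = false) ∨ (j < m ∧ σ i j m = false)

instance (σ : ℕ → ℕ → ℕ → Bool) (i j m : ℕ) : Decidable (IsLeft σ i j m) := by
  unfold IsLeft; infer_instance

instance (σ : ℕ → ℕ → ℕ → Bool) (i j m : ℕ) : Decidable (IsRight σ i j m) := by
  unfold IsRight; infer_instance

/-- `1` on the left, `-1` on the right and `0` at the endpoints of the edge `(i, j)`. -/
def side (σ : ℕ → ℕ → ℕ → Bool) (i j m : ℕ) : ℤ :=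
  (if IsLeft σ i j m then 1 else 0) - (if IsRight σ i j m then 1 else 0)

/-- The number of vertices to the left of `(i, j)` minus the number to its right. -/
def imbalance (σ : ℕ → ℕ → ℕ → Bool) (n i j : ℕ) : ℤ :=
  ∑ m ∈ range n, side σ i j m

/-- The rotations at all vertices are transitive. -/
def Admissible (σ : ℕ → ℕ → ℕ → Bool) (n : ℕ) : Prop :=
  ∀ a b c d : ℕ, a < b → b < c → c < d → d < n →
    (σ a b c = σ a c d → σ a b d = σ a b c) ∧ (σ a b d = σ b c d → σ a c d = σ a b d)

lemma quadSum_congr {n : ℕ} {F G : ℕ → ℕ → ℕ → ℕ → ℤ}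
    (h : ∀ a b c d, a < b → b < c → c < d → d < n → F a b c d = G a b c d) :
    quadSum n F = quadSum n G := by
  refine sum_congr rfl fun a _ => sum_congr rfl fun b _ => sum_congr rfl fun c _ =>
    sum_congr rfl fun d hd => ?_
  split_ifs with hc
  · exact h a b c d hc.1 hc.2.1 hc.2.2 (mem_range.1 hd)
  · rfl

lemma quadSum_add (n : ℕ) (F G : ℕ → ℕ → ℕ → ℕ → ℤ) :
    quadSum n (fun a b c d => F a b c d + G a b c d) = quadSum n F + quadSum n G := by
  simp only [quadSum, ← sum_add_distrib]
  refine sum_congr rfl fun a _ => sum_congr rfl fun b _ => sum_congr rfl fun c _ =>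
    sum_congr rfl fun d hd => ?_
  split_ifs <;> simp

lemma quadSum_const_mul (n : ℕ) (r : ℤ) (F : ℕ → ℕ → ℕ → ℕ → ℤ) :
    quadSum n (fun a b c d => r * F a b c d) = r * quadSum n F := by
  simp only [quadSum, mul_sum, mul_ite, mul_zero]

lemma pairSum_congr {n : ℕ} {F G : ℕ → ℕ → ℤ}
    (h : ∀ i j, i < j → j < n → F i j = G i j) : pairSum n F = pairSum n G := by
  refine sum_congr rfl fun i _ => sum_congr rfl fun j hj => ?_
  split_ifs with hc
  · exact h i j hc (mem_range.1 hj)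
  · rfl

/-- The six interleavings of two increasing pairs, as sums over increasing quadruples. -/
lemma sum_two_pairs (n : ℕ) (G : ℕ → ℕ → ℕ → ℕ → ℤ) :
    ∑ i ∈ range n, ∑ j ∈ range n, ∑ k ∈ range n, ∑ l ∈ range n,
      (if i < j ∧ k < l ∧ i ≠ k ∧ i ≠ l ∧ j ≠ k ∧ j ≠ l then G i j k l else 0) =
    quadSum n (fun a b c d => G a b c d + G a c b d + G a d b c + G b c a d + G b d a c
      + G c d a b) := by
  have e1 : quadSum n (fun a b c d => G a c b d) =
      ∑ i ∈ range n, ∑ j ∈ range n, ∑ k ∈ range n, ∑ l ∈ range n,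
        if i < k ∧ k < j ∧ j < l then G i j k l else 0 :=
    sum_congr rfl fun a _ => sum_comm
  have e2 : quadSum n (fun a b c d => G a d b c) =
      ∑ i ∈ range n, ∑ j ∈ range n, ∑ k ∈ range n, ∑ l ∈ range n,
        if i < k ∧ k < l ∧ l < j then G i j k l else 0 := by
    refine sum_congr rfl fun a _ => ?_
    rw [sum_comm' (t' := range n) (s' := fun _ => range n) (by simp)]
    rw [sum_congr rfl fun b _ => sum_comm]
    rw [sum_comm]
    exact sum_congr rfl fun _ _ => sum_comm
  have e3 : quadSum n (fun a b c d => G b c a d) =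
      ∑ i ∈ range n, ∑ j ∈ range n, ∑ k ∈ range n, ∑ l ∈ range n,
        if k < i ∧ i < j ∧ j < l then G i j k l else 0 := by
    unfold quadSum
    rw [sum_comm]
    exact sum_congr rfl fun _ _ => sum_comm
  have e4 : quadSum n (fun a b c d => G b d a c) =
      ∑ i ∈ range n, ∑ j ∈ range n, ∑ k ∈ range n, ∑ l ∈ range n,
        if k < i ∧ i < l ∧ l < j then G i j k l else 0 := by
    unfold quadSum
    rw [sum_comm]
    refine sum_congr rfl fun i _ => ?_
    rw [sum_congr rfl fun b _ => sum_comm]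
    exact sum_comm
  have e5 : quadSum n (fun a b c d => G c d a b) =
      ∑ i ∈ range n, ∑ j ∈ range n, ∑ k ∈ range n, ∑ l ∈ range n,
        if k < l ∧ l < i ∧ i < j then G i j k l else 0 := by
    unfold quadSum
    rw [sum_congr rfl fun a _ => sum_comm]
    rw [sum_comm]
    refine sum_congr rfl fun i _ => ?_
    rw [sum_congr rfl fun b _ => sum_comm]
    exact sum_comm
  simp only [quadSum_add, e1, e2, e3, e4, e5]
  unfold quadSum
  simp only [← sum_add_distrib]
  refine sum_congr rfl fun a _ => sum_congr rfl fun b _ => sum_congr rfl fun c _ =>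
    sum_congr rfl fun d hd => ?_
  clear e1 e2 e3 e4 e5
  by_cases h : a < b ∧ c < d
  · grind (splits := 30)
  · grind (splits := 30)

lemma side_self_left (σ : ℕ → ℕ → ℕ → Bool) {i j : ℕ} (h : i < j) : side σ i j i = 0 := by
  simp [side, IsLeft, IsRight]; grind

lemma side_self_right (σ : ℕ → ℕ → ℕ → Bool) {i j : ℕ} (h : i < j) : side σ i j j = 0 := by
  simp [side, IsLeft, IsRight]; grind

lemma side_sq (σ : ℕ → ℕ → ℕ → Bool) {i j m : ℕ} (h : i < j) (hi : m ≠ i) (hj : m ≠ j) :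
    side σ i j m * side σ i j m = 1 := by
  simp only [side, IsLeft, IsRight]
  grind

lemma side_mid {σ : ℕ → ℕ → ℕ → Bool} {i j m : ℕ} (h : i < m) (h' : m < j) :
    side σ i j m = if σ i m j then -1 else 1 := by
  simp only [side, IsLeft, IsRight]
  grind

lemma side_lt {σ : ℕ → ℕ → ℕ → Bool} {i j m : ℕ} (h : m < i) (h' : i < j) :
    side σ i j m = if σ m i j then 1 else -1 := by
  simp only [side, IsLeft, IsRight]
  grind

lemma side_gt {σ : ℕ → ℕ → ℕ → Bool} {i j m : ℕ} (h : j < m) (h' : i < j) :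
    side σ i j m = if σ i j m then 1 else -1 := by
  simp only [side, IsLeft, IsRight]
  grind

lemma sq_sum_eq (n : ℕ) (f : ℕ → ℤ) :
    (∑ m ∈ range n, f m) ^ 2 = ∑ m ∈ range n, f m * f m +
      2 * ∑ u ∈ range n, ∑ v ∈ range n, if u < v then f u * f v else 0 := by
  have e : ∑ u ∈ range n, ∑ v ∈ range n, (if v < u then f u * f v else 0) =
      ∑ u ∈ range n, ∑ v ∈ range n, if u < v then f u * f v else 0 := by
    rw [sum_comm]
    exact sum_congr rfl fun _ _ => sum_congr rfl fun _ _ => by rw [mul_comm]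
  have e' : ∑ m ∈ range n, f m * f m =
      ∑ u ∈ range n, ∑ v ∈ range n, if u = v then f u * f v else 0 := by
    refine sum_congr rfl fun u hu => ?_
    rw [sum_ite_eq, if_pos hu]
  rw [two_mul]
  nth_rewrite 1 [← e]
  rw [e', sq, sum_mul_sum]
  simp only [← sum_add_distrib]
  refine sum_congr rfl fun u _ => sum_congr rfl fun v _ => ?_
  grind

/-- For admissible signatures the number of odd pairs is determined by the imbalances of the
edges. -/
theorem four_mul_quadSum_oddPairs {σ : ℕ → ℕ → ℕ → Bool} {n : ℕ} (hσ : Admissible σ n) :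
    4 * quadSum n (oddPairs σ) = pairSum n fun i j => imbalance σ n i j ^ 2 - (n - 2) := by
  have h1 : pairSum n (fun i j => imbalance σ n i j ^ 2 - (n - 2)) =
      2 * ∑ i ∈ range n, ∑ j ∈ range n, ∑ k ∈ range n, ∑ l ∈ range n,
        (if i < j ∧ k < l ∧ i ≠ k ∧ i ≠ l ∧ j ≠ k ∧ j ≠ l then
          side σ i j k * side σ i j l else 0) := by
    simp only [pairSum, mul_sum]
    refine sum_congr rfl fun i hi => sum_congr rfl fun j hj => ?_
    rw [mem_range] at hi hj
    split_ifs with hij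
    · rw [imbalance, sq_sum_eq]
      have h2 : ∑ m ∈ range n, side σ i j m * side σ i j m = (n : ℤ) - 2 := by
        have h3 : ∀ m ∈ range n, side σ i j m * side σ i j m =
            1 - (if m = i then 1 else 0) - (if m = j then 1 else 0) := by
          intro m _
          by_cases hmi : m = i
          · subst hmi; rw [side_self_left σ hij]; simp [hij.ne]
          · by_cases hmj : m = j
            · subst hmj; rw [side_self_right σ hij]; simp [hij.ne']
            · rw [side_sq σ hij hmi hmj]; simp [hmi, hmj]
        rw [sum_congr rfl h3]
        simp [sum_sub_distrib, hi, hj]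
        ring
      rw [h2, add_sub_cancel_left]
      simp only [mul_sum]
      refine sum_congr rfl fun k _ => sum_congr rfl fun l _ => ?_
      have := side_self_left σ hij
      have := side_self_right σ hij
      grind
    · simp [hij]
  rw [h1, sum_two_pairs n (fun i j k l => side σ i j k * side σ i j l),
    ← quadSum_const_mul, ← quadSum_const_mul]
  refine quadSum_congr fun a b c d hab hbc hcd hd => ?_
  obtain ⟨hR, hL⟩ := hσ a b c d hab hbc hcd hd
  have hac := hab.trans hbc
  have hbd := hbc.trans hcd
  have had := hac.trans hcd
  simp only [side_mid hab hbc, side_mid hbc hcd, side_mid hab hbd, side_mid hac hcd,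
    side_lt hab hbc, side_lt hbc hcd, side_lt hab hbd, side_lt hac hcd,
    side_gt hbc hab, side_gt hcd hbc, side_gt hbd hab, side_gt hcd hac, oddPairs]
  revert hR hL
  generalize σ a b c = p
  generalize σ a b d = q
  generalize σ a c d = r
  generalize σ b c d = s
  revert p q r s
  decide

section Rank

variable {A : Finset ℕ} {r : ℕ → ℕ → Prop} [DecidableRel r]

/-- Summing a function of the rank over a finite set with a strict linear order. -/
lemma sum_rank_eq (hirr : ∀ a ∈ A, ¬ r a a) (htot : ∀ a ∈ A, ∀ b ∈ A, a ≠ b → r a b ∨ r b a)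
    (htr : ∀ a ∈ A, ∀ b ∈ A, ∀ c ∈ A, r a b → r b c → r a c) (g : ℕ → ℕ) :
    ∑ j ∈ A, g #{m ∈ A | r m j} = ∑ x ∈ range #A, g x := by
  have key : ∀ a ∈ A, ∀ b ∈ A, r a b → #{m ∈ A | r m a} < #{m ∈ A | r m b} := by
    intro a ha b hb hab
    refine card_lt_card ⟨fun m hm => ?_, fun hsub => ?_⟩
    · rw [mem_filter] at hm ⊢
      exact ⟨hm.1, htr m hm.1 a ha b hb hm.2 hab⟩
    · exact hirr a ha (mem_filter.1 (hsub (mem_filter.2 ⟨ha, hab⟩))).2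
  have hinj : Set.InjOn (fun j => #{m ∈ A | r m j}) A := by
    intro a ha b hb hab
    by_contra hne
    rcases htot a ha b hb hne with h | h
    · exact (key a ha b hb h).ne hab
    · exact (key b hb a ha h).ne' hab
  have himg : A.image (fun j => #{m ∈ A | r m j}) = range #A := by
    refine eq_of_subset_of_card_le (fun x hx => ?_) ?_
    · obtain ⟨j, hj, rfl⟩ := mem_image.1 hx
      refine mem_range.2 (card_lt_card ⟨filter_subset _ _, fun hsub => ?_⟩)
      exact hirr j hj (mem_filter.1 (hsub hj)).2
    · rw [card_range, card_image_of_injOn hinj]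
  rw [← himg, sum_image hinj]

lemma min_card_le_card_rank_lt (hirr : ∀ a ∈ A, ¬ r a a)
    (htot : ∀ a ∈ A, ∀ b ∈ A, a ≠ b → r a b ∨ r b a)
    (htr : ∀ a ∈ A, ∀ b ∈ A, ∀ c ∈ A, r a b → r b c → r a c) (t : ℕ) :
    min #A t ≤ #{j ∈ A | #{m ∈ A | r m j} < t} := by
  rw [card_filter, sum_rank_eq hirr htot htr (fun x => if x < t then 1 else 0),
    ← card_filter]
  rw [← card_range (min #A t)]
  refine card_le_card fun x hx => ?_
  simp only [mem_filter, mem_range] at hx ⊢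
  omega

end Rank

/-- Number of vertices to the left of `(i, j)` among the first `n`. -/
def leftCard (σ : ℕ → ℕ → ℕ → Bool) (n i j : ℕ) : ℕ := #{m ∈ range n | IsLeft σ i j m}

/-- Number of vertices to the right of `(i, j)` among the first `n`. -/
def rightCard (σ : ℕ → ℕ → ℕ → Bool) (n i j : ℕ) : ℕ := #{m ∈ range n | IsRight σ i j m}

/-- The number of `k`-edges with `k < K`, each counted with multiplicity `K - k`. -/
def weight (σ : ℕ → ℕ → ℕ → Bool) (n K : ℕ) : ℕ :=
  ∑ i ∈ range n, ∑ j ∈ range n,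
    if i < j then K - min (leftCard σ n i j) (rightCard σ n i j) else 0

lemma isRight_iff {σ : ℕ → ℕ → ℕ → Bool} {i j m : ℕ} (hij : i < j) (hi : m ≠ i) (hj : m ≠ j) :
    IsRight σ i j m ↔ ¬ IsLeft σ i j m := by
  unfold IsRight IsLeft
  grind

lemma leftCard_add_rightCard (σ : ℕ → ℕ → ℕ → Bool) {n i j : ℕ} (hij : i < j) (hj : j < n) :
    leftCard σ n i j + rightCard σ n i j + 2 = n := by
  have h1 : leftCard σ n i j = #{m ∈ ((range n).erase i).erase j | IsLeft σ i j m} := by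
    unfold leftCard
    congr 1
    ext m
    simp only [IsLeft]
    grind
  have h2 : rightCard σ n i j = #{m ∈ ((range n).erase i).erase j | ¬ IsLeft σ i j m} := by
    unfold rightCard
    congr 1
    ext m
    simp only [mem_filter, mem_erase]
    constructor
    · rintro ⟨hm, h⟩
      have hi : m ≠ i := by unfold IsRight at h; grind
      have hj : m ≠ j := by unfold IsRight at h; grind
      exact ⟨⟨hj, hi, hm⟩, (isRight_iff hij hi hj).1 h⟩
    · rintro ⟨⟨hj, hi, hm⟩, h⟩
      exact ⟨hm, (isRight_iff hij hi hj).2 h⟩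
  rw [h1, h2, card_filter_add_card_filter_not, card_erase_of_mem, card_erase_of_mem, card_range]
  · omega
  · simp; omega
  · simp; omega

lemma imbalance_eq (σ : ℕ → ℕ → ℕ → Bool) (n i j : ℕ) :
    imbalance σ n i j = leftCard σ n i j - rightCard σ n i j := by
  simp [imbalance, side, leftCard, rightCard, sum_sub_distrib]

lemma leftCard_succ (σ : ℕ → ℕ → ℕ → Bool) (n i j : ℕ) :
    leftCard σ (n + 1) i j = leftCard σ n i j + if IsLeft σ i j n then 1 else 0 := by
  simp only [leftCard, card_filter, sum_range_succ]

lemma rightCard_succ (σ : ℕ → ℕ → ℕ → Bool) (n i j : ℕ) :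
    rightCard σ (n + 1) i j = rightCard σ n i j + if IsRight σ i j n then 1 else 0 := by
  simp only [rightCard, card_filter, sum_range_succ]

lemma isLeft_trans_right {σ : ℕ → ℕ → ℕ → Bool} {n i a b c : ℕ} (hσ : Admissible σ n)
    (ha : i < a) (hb : i < b) (hc : i < c) (ha' : a < n) (hb' : b < n) (hc' : c < n)
    (h₁ : IsLeft σ i a b) (h₂ : IsLeft σ i b c) : IsLeft σ i a c := by
  have h1 := fun x y z => hσ i x y z
  unfold IsLeft at *
  have := h1 a b c
  have := h1 a c b
  have := h1 b a c
  have := h1 b c a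
  have := h1 c a b
  have := h1 c b a
  have : a ≠ b := by grind
  have : b ≠ c := by grind
  have : a ≠ c := by rintro rfl; grind
  clear hσ h1
  rcases lt_or_gt_of_ne ‹a ≠ b› with h | h <;> rcases lt_or_gt_of_ne ‹b ≠ c› with h' | h' <;>
    rcases lt_or_gt_of_ne ‹a ≠ c› with h'' | h'' <;> grind

lemma isLeft_trans_left {σ : ℕ → ℕ → ℕ → Bool} {n a b c : ℕ} (hσ : Admissible σ (n + 1))
    (ha : a < n) (hb : b < n) (hc : c < n)
    (h₁ : IsLeft σ b n a) (h₂ : IsLeft σ c n b) : IsLeft σ c n a := by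
  have h1 := fun x y z hx hy hz => hσ x y z n hx hy hz (Nat.lt_succ_self n)
  unfold IsLeft at *
  have := h1 a b c
  have := h1 a c b
  have := h1 b a c
  have := h1 b c a
  have := h1 c a b
  have := h1 c b a
  have : a ≠ b := by grind
  have : b ≠ c := by grind
  have : a ≠ c := by rintro rfl; grind
  clear hσ h1
  rcases lt_or_gt_of_ne ‹a ≠ b› with h | h <;> rcases lt_or_gt_of_ne ‹b ≠ c› with h' | h' <;>
    rcases lt_or_gt_of_ne ‹a ≠ c› with h'' | h'' <;> grind

/-- The edges at the last vertex contribute at least `(K + 1) (K + 2)` to the weight. -/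
lemma weight_last {σ : ℕ → ℕ → ℕ → Bool} {n K : ℕ} (hσ : Admissible σ (n + 1))
    (hK : 2 * (K + 1) ≤ n) :
    (K + 1) * (K + 2) ≤ ∑ i ∈ range n,
      (K + 1 - min (leftCard σ (n + 1) i n) (rightCard σ (n + 1) i n)) := by
  have h1 : ∀ i ∈ range n, K + 1 - min (leftCard σ (n + 1) i n) (rightCard σ (n + 1) i n) =
      (fun x => K + 1 - min x (n - 1 - x)) #{m ∈ range n | IsLeft σ i n m} := by
    intro i hi
    have hi := mem_range.1 hi
    have h2 := leftCard_add_rightCard σ hi (show n < n + 1 by omega)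
    have h3 := leftCard_succ σ n i n
    rw [if_neg (by unfold IsLeft; omega)] at h3
    simp only
    rw [← leftCard]
    have : rightCard σ (n + 1) i n = n - 1 - leftCard σ n i n := by omega
    rw [this, h3, add_zero]
  rw [sum_congr rfl h1, sum_rank_eq (A := range n) (r := fun m i => IsLeft σ i n m)
    (g := fun x => K + 1 - min x (n - 1 - x))]
  · rw [card_range]
    have e : ∀ N, 2 * N ≤ n → N ≤ K + 1 →
        2 * ∑ x ∈ range N, (K + 1 - x) ≤ ∑ x ∈ range n, (K + 1 - min x (n - 1 - x)) := by
      intro N hN hNK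
      have hn : n = N + (n - 2 * N + N) := by omega
      rw [hn, sum_range_add, sum_range_add, ← hn, two_mul, ← add_assoc]
      have e1 : ∑ x ∈ range N, (K + 1 - x) ≤
          ∑ x ∈ range N, (K + 1 - min x (n - 1 - x)) :=
        sum_le_sum fun x _ => by omega
      have e2 : ∑ x ∈ range N, (K + 1 - x) ≤ ∑ x ∈ range N,
          (K + 1 - min (N + (n - 2 * N + x)) (n - 1 - (N + (n - 2 * N + x)))) := by
        rw [← sum_range_reflect]
        refine sum_le_sum fun x hx => ?_
        have := mem_range.1 hx
        omega
      omega
    have e3 : ∀ N, N ≤ K + 1 → 2 * ∑ x ∈ range N, (K + 1 - x) + N * N = (2 * K + 3) * N := by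
      intro N hN
      induction N with
      | zero => simp
      | succ N ih =>
        have := ih (by omega)
        obtain ⟨t, ht⟩ := Nat.exists_eq_add_of_le (show N ≤ K + 1 by omega)
        rw [sum_range_succ, show K + 1 - N = t by omega]
        have : K = N + t - 1 := by omega
        have : t ≥ 1 := by omega
        obtain ⟨u, rfl⟩ := Nat.exists_eq_add_of_le this
        have : K = N + u := by omega
        subst this
        linarith
    have := e (K + 1) hK le_rfl
    have := e3 (K + 1) le_rfl
    nlinarith
  · intro a ha
    have := mem_range.1 ha
    unfold IsLeft
    omega
  · intro a ha b hb hab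
    have := mem_range.1 ha
    have := mem_range.1 hb
    unfold IsLeft
    rcases lt_or_gt_of_ne hab with h | h <;> grind
  · intro a ha b hb c hc
    exact isLeft_trans_left hσ (mem_range.1 ha) (mem_range.1 hb) (mem_range.1 hc)

/-- The edge `(i, j)` is a `k`-edge for the same `k < K + 1` with and without the vertex `n`. -/
def Invariant (σ : ℕ → ℕ → ℕ → Bool) (n K i j : ℕ) : Prop :=
  (IsLeft σ i j n ∧ rightCard σ n i j ≤ K) ∨ (IsRight σ i j n ∧ leftCard σ n i j ≤ K)

instance (σ : ℕ → ℕ → ℕ → Bool) (n K i j : ℕ) : Decidable (Invariant σ n K i j) := by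
  unfold Invariant; infer_instance

lemma card_invariant {σ : ℕ → ℕ → ℕ → Bool} {n K i : ℕ} (hσ : Admissible σ (n + 1))
    (hK : 2 * (K + 1) ≤ n) (hi : i ≤ K) :
    K + 1 - i ≤ #{j ∈ range n | i < j ∧ Invariant σ n K i j} := by
  set A := {j ∈ range n | i < j ∧ IsLeft σ i j n} with hA
  set B := {j ∈ range n | i < j ∧ ¬ IsLeft σ i j n} with hB
  have hAB : #A + #B = n - 1 - i := by
    have h1 : A = {j ∈ Ioo i n | IsLeft σ i j n} := by ext; simp [hA]; tauto
    have h2 : B = {j ∈ Ioo i n | ¬ IsLeft σ i j n} := by ext; simp [hB]; tauto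
    rw [h1, h2, card_filter_add_card_filter_not, Nat.card_Ioo]
    omega
  have hirr : ∀ a, i < a → ¬ IsLeft σ i a a := fun a _ => by unfold IsLeft; omega
  have htot : ∀ a b, i < a → i < b → a ≠ b → IsLeft σ i a b ∨ IsLeft σ i b a := by
    intro a b ha hb hab
    unfold IsLeft
    rcases lt_or_gt_of_ne hab with h | h <;> grind
  have hanti : ∀ a b, i < a → i < b → IsLeft σ i a b → ¬ IsLeft σ i b a := by
    intro a b ha hb h
    unfold IsLeft at *
    grind
  have htr := fun a b c => @isLeft_trans_right σ (n + 1) i a b c hσ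
  have cA := min_card_le_card_rank_lt (A := A) (r := fun m j => IsLeft σ i m j)
    (fun a ha => hirr a (mem_filter.1 ha).2.1)
    (fun a ha b hb hab => htot a b (mem_filter.1 ha).2.1 (mem_filter.1 hb).2.1 hab)
    (fun a ha b hb c hc => by
      simp only [hA, mem_filter, mem_range] at ha hb hc
      exact htr a b c (by omega) (by omega) (by omega) (by omega) (by omega) (by omega))
    (K + 1 - i)
  have cB := min_card_le_card_rank_lt (A := B) (r := fun m j => IsLeft σ i j m)
    (fun a ha => hirr a (mem_filter.1 ha).2.1)
    (fun a ha b hb hab => (htot a b (mem_filter.1 ha).2.1 (mem_filter.1 hb).2.1 hab).symm)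
    (fun a ha b hb c hc h1 h2 => by
      simp only [hB, mem_filter, mem_range] at ha hb hc
      exact htr c b a (by omega) (by omega) (by omega) (by omega) (by omega) (by omega) h2 h1)
    (K + 1 - i)
  have hsub : {j ∈ A | #{m ∈ A | IsLeft σ i m j} < K + 1 - i} ∪
      {j ∈ B | #{m ∈ B | IsLeft σ i j m} < K + 1 - i} ⊆
      {j ∈ range n | i < j ∧ Invariant σ n K i j} := by
    intro j hj
    rcases mem_union.1 hj with hj | hj <;> obtain ⟨hj, hr⟩ := mem_filter.1 hj
    · simp only [hA, mem_filter, mem_range] at hj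
      refine mem_filter.2 ⟨mem_range.2 hj.1, hj.2.1, Or.inl ⟨hj.2.2, ?_⟩⟩
      have : {m ∈ range n | IsRight σ i j m} ⊆ range i ∪ {m ∈ A | IsLeft σ i m j} := by
        intro m hm
        simp only [mem_filter, mem_range] at hm
        have hmi : m ≠ i := by rintro rfl; have := hm.2; unfold IsRight at this; omega
        have hmj : m ≠ j := by rintro rfl; have := hm.2; unfold IsRight at this; omega
        rw [isRight_iff hj.2.1 hmi hmj] at hm
        rw [mem_union, mem_range]
        by_cases hlt : m < i
        · exact Or.inl hlt
        · have him : i < m := by omega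
          have hl := (htot m j him hj.2.1 hmj).resolve_right hm.2
          refine Or.inr (mem_filter.2 ⟨mem_filter.2 ⟨mem_range.2 hm.1, him, ?_⟩, hl⟩)
          exact htr m j n him hj.2.1 (by omega) (by omega) (by omega) (by omega) hl hj.2.2
      have := (card_le_card this).trans (card_union_le _ _)
      rw [card_range] at this
      unfold rightCard
      omega
    · simp only [hB, mem_filter, mem_range] at hj
      refine mem_filter.2 ⟨mem_range.2 hj.1, hj.2.1, Or.inr
        ⟨(isRight_iff hj.2.1 (by omega) (by omega)).2 hj.2.2, ?_⟩⟩
      have : {m ∈ range n | IsLeft σ i j m} ⊆ range i ∪ {m ∈ B | IsLeft σ i j m} := by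
        intro m hm
        simp only [mem_filter, mem_range] at hm
        have hmi : m ≠ i := by rintro rfl; have := hm.2; unfold IsLeft at this; omega
        rw [mem_union, mem_range]
        by_cases hlt : m < i
        · exact Or.inl hlt
        · have him : i < m := by omega
          refine Or.inr (mem_filter.2 ⟨mem_filter.2 ⟨mem_range.2 hm.1, him, fun hl => ?_⟩, hm.2⟩)
          exact hj.2.2
            (htr j m n hj.2.1 him (by omega) (by omega) (by omega) (by omega) hm.2 hl)
      have := (card_le_card this).trans (card_union_le _ _)
      rw [card_range] at this
      unfold leftCard
      omega
  have := card_le_card hsub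
  rw [card_union_of_disjoint] at this
  · omega
  · rw [disjoint_left]
    intro j hj hj'
    exact (mem_filter.1 (mem_filter.1 hj').1).2.2 (mem_filter.1 (mem_filter.1 hj).1).2.2

lemma sum_invariant {σ : ℕ → ℕ → ℕ → Bool} {n K : ℕ} (hσ : Admissible σ (n + 1))
    (hK : 2 * (K + 1) ≤ n) :
    (K + 1) * (K + 2) ≤ 2 * ∑ i ∈ range n, ∑ j ∈ range n,
      if i < j ∧ Invariant σ n K i j then 1 else 0 := by
  have h1 : ∑ i ∈ range (K + 1), (K + 1 - i) ≤ ∑ i ∈ range n, ∑ j ∈ range n,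
      if i < j ∧ Invariant σ n K i j then 1 else 0 := by
    calc _ ≤ ∑ i ∈ range (K + 1), ∑ j ∈ range n, if i < j ∧ Invariant σ n K i j then 1 else 0 := by
          refine sum_le_sum fun i hi => ?_
          rw [← card_filter]
          exact card_invariant hσ hK (by have := mem_range.1 hi; omega)
      _ ≤ _ := sum_le_sum_of_subset (range_subset_range.2 (by omega))
  have h2 : ∑ i ∈ range (K + 1), (K + 1 - i) = ∑ i ∈ range (K + 2), i := by
    rw [← sum_range_reflect, sum_range_succ' _ (K + 1), add_zero]
    refine sum_congr rfl fun x hx => ?_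
    have := mem_range.1 hx
    omega
  have h3 := sum_range_id_mul_two (K + 2)
  simp only [show K + 2 - 1 = K + 1 by omega] at h3
  nlinarith

lemma weight_succ {σ : ℕ → ℕ → ℕ → Bool} {n K : ℕ} (hσ : Admissible σ (n + 1))
    (hK : 2 * (K + 1) ≤ n) :
    2 * weight σ n K + 3 * ((K + 1) * (K + 2)) ≤ 2 * weight σ (n + 1) (K + 1) := by
  have h1 : weight σ n K + ∑ i ∈ range n, ∑ j ∈ range n,
      (if i < j ∧ Invariant σ n K i j then 1 else 0) ≤
      ∑ i ∈ range n, ∑ j ∈ range n, if i < j then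
        K + 1 - min (leftCard σ (n + 1) i j) (rightCard σ (n + 1) i j) else 0 := by
    unfold weight
    simp only [← sum_add_distrib]
    refine sum_le_sum fun i hi => sum_le_sum fun j hj => ?_
    rw [mem_range] at hi hj
    by_cases hij : i < j
    · simp only [hij, true_and, if_true, leftCard_succ, rightCard_succ]
      have h2 := leftCard_add_rightCard σ hij hj
      have h3 := isRight_iff (σ := σ) (m := n) hij (by omega) (by omega)
      by_cases h4 : IsLeft σ i j n
      · simp only [Invariant, h3, h4]
        simp
        split_ifs <;> omega
      · simp only [Invariant, h3, h4]
        simp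
        split_ifs <;> omega
    · simp [hij]
  have h5 : weight σ (n + 1) (K + 1) = (∑ i ∈ range n, ∑ j ∈ range n, if i < j then
        K + 1 - min (leftCard σ (n + 1) i j) (rightCard σ (n + 1) i j) else 0) +
        ∑ i ∈ range n, (K + 1 - min (leftCard σ (n + 1) i n) (rightCard σ (n + 1) i n)) := by
    unfold weight
    rw [sum_range_succ]
    have : ∑ j ∈ range (n + 1), (if n < j then
        K + 1 - min (leftCard σ (n + 1) n j) (rightCard σ (n + 1) n j) else 0) = 0 :=
      sum_eq_zero fun j hj => if_neg (by have := mem_range.1 hj; omega)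
    rw [this, add_zero, ← sum_add_distrib]
    refine sum_congr rfl fun i hi => ?_
    rw [sum_range_succ, if_pos (mem_range.1 hi)]
  have h6 := weight_last hσ hK
  have h7 := sum_invariant hσ hK
  omega

lemma Admissible.mono {σ : ℕ → ℕ → ℕ → Bool} {n n' : ℕ} (hσ : Admissible σ n') (h : n ≤ n') :
    Admissible σ n :=
  fun a b c d hab hbc hcd hd => hσ a b c d hab hbc hcd (hd.trans_le h)

theorem le_two_mul_weight {σ : ℕ → ℕ → ℕ → Bool} (K : ℕ) : ∀ {n : ℕ}, Admissible σ n →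
    2 * K + 1 ≤ n → K * (K + 1) * (K + 2) ≤ 2 * weight σ n K := by
  induction K with
  | zero => simp
  | succ K ih =>
    intro n hσ hn
    obtain ⟨n, rfl⟩ : ∃ n', n = n' + 1 := ⟨n - 1, by omega⟩
    have h1 := ih (hσ.mono (Nat.le_succ n)) (by omega)
    have h2 := weight_succ (K := K) hσ (by omega)
    nlinarith

lemma sum_weight (σ : ℕ → ℕ → ℕ → Bool) (n M : ℕ) :
    ((∑ K ∈ range (M + 1), weight σ n K : ℕ) : ℤ) = pairSum n fun i j =>
      ((∑ K ∈ range (M + 1), (K - min (leftCard σ n i j) (rightCard σ n i j)) : ℕ) : ℤ) := by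
  unfold weight pairSum
  rw [sum_comm]
  push_cast
  refine sum_congr rfl fun i _ => ?_
  rw [sum_comm]
  refine sum_congr rfl fun j _ => ?_
  split_ifs
  · rfl
  · simp

lemma two_mul_sum_tsub {M μ : ℕ} (h : μ ≤ M) :
    2 * ((∑ K ∈ range (M + 1), (K - μ) : ℕ) : ℤ) = (M - μ) * (M - μ + 1) := by
  obtain ⟨t, rfl⟩ := Nat.exists_eq_add_of_le h
  induction t with
  | zero =>
    rw [sum_eq_zero fun K hK => by have := mem_range.1 hK; omega]
    simp
  | succ t ih =>
    have := ih (by omega)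
    rw [← add_assoc, sum_range_succ, show μ + t + 1 - μ = t + 1 by omega]
    push_cast at *
    linarith

lemma le_sum_weight {σ : ℕ → ℕ → ℕ → Bool} {n : ℕ} (M : ℕ) (hσ : Admissible σ n)
    (h : 2 * M + 1 ≤ n) :
    (M : ℤ) * (M + 1) * (M + 2) * (M + 3) ≤
      8 * ((∑ K ∈ range (M + 1), weight σ n K : ℕ) : ℤ) := by
  induction M with
  | zero => simp
  | succ M ih =>
    have h1 := ih (by omega)
    have h2 : ((M + 1 : ℕ) : ℤ) * (M + 2) * (M + 3) ≤ 2 * (weight σ n (M + 1) : ℤ) := by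
      exact_mod_cast le_two_mul_weight (M + 1) hσ h
    rw [sum_range_succ]
    push_cast at *
    linarith

lemma pairSum_add (n : ℕ) (F G : ℕ → ℕ → ℤ) :
    pairSum n (fun i j => F i j + G i j) = pairSum n F + pairSum n G := by
  simp only [pairSum, ← sum_add_distrib]
  refine sum_congr rfl fun a _ => sum_congr rfl fun b _ => ?_
  split_ifs <;> simp

lemma pairSum_const_mul (n : ℕ) (r : ℤ) (F : ℕ → ℕ → ℤ) :
    pairSum n (fun i j => r * F i j) = r * pairSum n F := by
  simp only [pairSum, mul_sum, mul_ite, mul_zero]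

lemma pairSum_succ (n : ℕ) (F : ℕ → ℕ → ℤ) :
    pairSum (n + 1) F = pairSum n F + ∑ i ∈ range n, F i n := by
  unfold pairSum
  rw [sum_range_succ, sum_eq_zero (s := range (n + 1)) (f := fun j => if n < j then F n j else 0)
    fun j hj => if_neg (by have := mem_range.1 hj; omega), add_zero, ← sum_add_distrib]
  refine sum_congr rfl fun i hi => ?_
  rw [sum_range_succ, if_pos (mem_range.1 hi)]

lemma two_mul_pairSum_const (n : ℕ) (r : ℤ) : 2 * pairSum n (fun _ _ => r) = n * (n - 1) * r := by
  induction n with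
  | zero => simp [pairSum]
  | succ n ih =>
    rw [pairSum_succ, mul_add, ih]
    simp
    ring

/-- Hill's number, split by parity. -/
lemma four_mul_Zval_even (M : ℕ) :
    4 * (Zval (2 * M + 2) : ℤ) = (M + 1) * M * M * (M - 1) := by
  rcases M with _ | M
  · simp [Zval]
  · have h : 4 ∣ (M + 1 + 1) * (M + 1) * (M + 1) * M := by
      obtain ⟨a, ha⟩ := (Nat.even_mul_succ_self M).two_dvd
      obtain ⟨b, hb⟩ := (Nat.even_mul_succ_self (M + 1)).two_dvd
      refine ⟨a * b, ?_⟩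
      calc _ = (M * (M + 1)) * ((M + 1) * (M + 1 + 1)) := by ring
        _ = _ := by rw [ha, hb]; ring
    unfold Zval
    rw [show (2 * (M + 1) + 2) / 2 = M + 1 + 1 by omega,
      show (2 * (M + 1) + 2 - 1) / 2 = M + 1 by omega,
      show (2 * (M + 1) + 2 - 2) / 2 = M + 1 by omega,
      show (2 * (M + 1) + 2 - 3) / 2 = M by omega]
    have := Nat.mul_div_cancel' h
    zify at this
    push_cast
    rw [this]
    ring

lemma four_mul_Zval_odd (M : ℕ) :
    4 * (Zval (2 * M + 3) : ℤ) = (M + 1) * (M + 1) * M * M := by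
  have h : 4 ∣ (M + 1) * (M + 1) * M * M := by
    obtain ⟨a, ha⟩ := (Nat.even_mul_succ_self M).two_dvd
    refine ⟨a * a, ?_⟩
    calc _ = (M * (M + 1)) * (M * (M + 1)) := by ring
      _ = _ := by rw [ha]; ring
  unfold Zval
  rw [show (2 * M + 3) / 2 = M + 1 by omega, show (2 * M + 3 - 1) / 2 = M + 1 by omega,
    show (2 * M + 3 - 2) / 2 = M by omega, show (2 * M + 3 - 3) / 2 = M by omega]
  have := Nat.mul_div_cancel' h
  zify at this
  push_cast
  rw [this]

/-- Hill's bound for admissible signatures. -/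
theorem Zval_le_quadSum_oddPairs {σ : ℕ → ℕ → ℕ → Bool} {n : ℕ} (hσ : Admissible σ n) :
    (Zval n : ℤ) ≤ quadSum n (oddPairs σ) := by
  have key := four_mul_quadSum_oddPairs hσ
  by_cases hn : n < 2
  · interval_cases n <;> simp [Zval, quadSum]
  obtain ⟨N, rfl⟩ : ∃ N, n = N + 2 := ⟨n - 2, by omega⟩
  obtain ⟨M, rfl | rfl⟩ : ∃ M, N = 2 * M ∨ N = 2 * M + 1 := ⟨N / 2, by omega⟩
  · rcases M with _ | M
    · simp [Zval, quadSum]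
      exact sum_nonneg fun a _ => sum_nonneg fun b _ => sum_nonneg fun c _ => sum_nonneg
        fun d _ => by unfold oddPairs; split_ifs <;> simp
    have h1 : pairSum (2 * (M + 1) + 2)
        (fun i j => imbalance σ (2 * (M + 1) + 2) i j ^ 2 - ((2 * (M + 1) + 2 : ℕ) - 2)) =
        4 * ((∑ K ∈ range (M + 1 + 1), weight σ (2 * (M + 1) + 2) K : ℕ) : ℤ) +
        4 * ((∑ K ∈ range (M + 1), weight σ (2 * (M + 1) + 2) K : ℕ) : ℤ) +
        pairSum (2 * (M + 1) + 2) (fun _ _ => -(2 * (M + 1))) := by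
      rw [sum_weight, sum_weight, ← pairSum_const_mul, ← pairSum_const_mul, ← pairSum_add,
        ← pairSum_add]
      refine pairSum_congr fun i j hij hj => ?_
      have h2 := leftCard_add_rightCard σ hij hj
      rw [imbalance_eq]
      set n := 2 * (M + 1) + 2 with hn
      obtain ⟨μ, hμ⟩ : ∃ μ, μ = min (leftCard σ n i j) (rightCard σ n i j) := ⟨_, rfl⟩
      have hd : (leftCard σ n i j - rightCard σ n i j : ℤ) ^ 2 = (2 * (M + 1 - μ)) ^ 2 := by
        rw [sq_eq_sq_iff_eq_or_eq_neg]
        omega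
      rw [hd, ← hμ]
      have h3 := two_mul_sum_tsub (M := M + 1) (μ := μ) (by omega)
      have h5 := sum_range_succ (fun K => K - μ) (M + 1)
      have h6 : ((M + 1 - μ : ℕ) : ℤ) = M + 1 - μ := by omega
      have h7 : ((∑ K ∈ range (M + 1), (K - μ) : ℕ) : ℤ) =
        ((∑ K ∈ range (M + 1 + 1), (K - μ) : ℕ) : ℤ) - (M + 1 - μ) := by
        rw [h5]; push_cast [h6]; ring
      rw [h7, hn]
      push_cast at h3 ⊢
      linarith
    have h8 := le_sum_weight (M + 1) hσ (by omega)
    have h9 := le_sum_weight M hσ (by omega)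
    have h10 := two_mul_pairSum_const (2 * (M + 1) + 2) (-(2 * (M + 1)))
    have h11 := four_mul_Zval_even (M + 1)
    rw [h1] at key
    push_cast at *
    nlinarith
  · have h1 : pairSum (2 * M + 1 + 2)
        (fun i j => imbalance σ (2 * M + 1 + 2) i j ^ 2 - ((2 * M + 1 + 2 : ℕ) - 2)) =
        8 * ((∑ K ∈ range (M + 1), weight σ (2 * M + 1 + 2) K : ℕ) : ℤ) +
        pairSum (2 * M + 1 + 2) (fun _ _ => -(2 * M)) := by
      rw [sum_weight, ← pairSum_const_mul, ← pairSum_add]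
      refine pairSum_congr fun i j hij hj => ?_
      have h2 := leftCard_add_rightCard σ hij hj
      rw [imbalance_eq]
      set n := 2 * M + 1 + 2 with hn
      obtain ⟨μ, hμ⟩ : ∃ μ, μ = min (leftCard σ n i j) (rightCard σ n i j) := ⟨_, rfl⟩
      have hd : (leftCard σ n i j - rightCard σ n i j : ℤ) ^ 2 = (2 * (M - μ) + 1) ^ 2 := by
        rw [sq_eq_sq_iff_eq_or_eq_neg]
        omega
      rw [hd, ← hμ]
      have h3 := two_mul_sum_tsub (M := M) (μ := μ) (by omega)
      rw [hn]
      push_cast at h3 ⊢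
      linarith
    have h8 := le_sum_weight M hσ (by omega)
    have h10 := two_mul_pairSum_const (2 * M + 1 + 2) (-(2 * M))
    have h11 := four_mul_Zval_odd M
    rw [show 2 * M + 1 + 2 = 2 * M + 3 by ring] at *
    rw [h1] at key
    push_cast at *
    nlinarith

/-- Exchanging the values of `v` at the two members of an inverted pair decreases the number of
inversions between `u` and `v`. -/
lemma sum_inversions_swap_lt {ι : Type*} [DecidableEq ι] {S : Finset ι} {a b : ι} (ha : a ∈ S)
    (hb : b ∈ S) (u v : ι → ℝ) (hab : (u a - u b) * (v a - v b) < 0) :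
    ∑ e ∈ S, ∑ f ∈ S, (if (u e - u f) * (v (Equiv.swap a b e) - v (Equiv.swap a b f)) < 0
      then 1 else 0) < ∑ e ∈ S, ∑ f ∈ S, if (u e - u f) * (v e - v f) < 0 then 1 else 0 := by
  set π := Equiv.swap a b with hπ
  have hS : ∀ e, e ∈ S ↔ π e ∈ S := by
    intro e
    rw [hπ, Equiv.swap_apply_def]
    split_ifs with h1 h2 <;> simp_all
  have key : ∀ x y p q : ℝ, (x - y) * (p - q) < 0 →
      (if x * q < 0 then 1 else 0) + (if y * p < 0 then 1 else 0) ≤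
      (if x * p < 0 then 1 else 0) + (if y * q < 0 then 1 else 0) := by
    intro x y p q h
    simp only [mul_neg_iff, sub_pos, sub_neg] at h ⊢
    rcases h with h | h <;> obtain ⟨h1, h2⟩ := h <;> grind
  have hab' : a ≠ b := by rintro rfl; simp at hab
  have hπa : π a = b := Equiv.swap_apply_left a b
  have hπb : π b = a := Equiv.swap_apply_right a b
  have hπc : ∀ c, c ≠ a → c ≠ b → π c = c := fun c => Equiv.swap_apply_of_ne_of_ne
  have hπ2 : ∀ c, π (π c) = c := Equiv.swap_apply_self a b
  have hcomm : ∀ F : ι → ι → ℕ, ∑ e ∈ S, ∑ f ∈ S, F (π e) (π f) = ∑ e ∈ S, ∑ f ∈ S, F e f :=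
    fun F => sum_equiv π hS fun e _ => sum_equiv π hS fun f _ => rfl
  have hle : ∀ e f, (if (u e - u f) * (v (π e) - v (π f)) < 0 then 1 else 0) +
      (if (u (π e) - u (π f)) * (v e - v f) < 0 then 1 else 0) ≤
      (if (u e - u f) * (v e - v f) < 0 then 1 else 0) +
      (if (u (π e) - u (π f)) * (v (π e) - v (π f)) < 0 then 1 else 0) := by
    intro e f
    have hneg : ∀ w x y z : ℝ, (w - x) * (y - z) = (x - w) * (z - y) := by intros; ring
    have hab2 : (u b - u a) * (v b - v a) < 0 := by rwa [hneg]
    have hab3 : 0 < (u b - u a) * (v a - v b) := by linarith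
    have hab4 : 0 < (u a - u b) * (v b - v a) := by linarith
    by_cases ea : e = a
    · subst ea
      by_cases fa : f = e
      · simp [fa]
      by_cases fb : f = b
      · rw [fb, hπa, hπb, if_neg hab4.not_gt, if_neg hab3.not_gt]
        omega
      · rw [hπa, hπc f fa fb]
        exact key _ _ _ _ (by linarith)
    by_cases eb : e = b
    · subst eb
      by_cases fb : f = e
      · simp [fb]
      by_cases fa : f = a
      · rw [fa, hπa, hπb, if_neg hab3.not_gt, if_neg hab4.not_gt]
        omega
      · rw [hπb, hπc f fa fb]
        exact key _ _ _ _ (by linarith)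
    rw [hπc e ea eb]
    by_cases fa : f = a
    · subst fa
      rw [hπa]
      simp only [hneg (u e)]
      exact key _ _ _ _ (by linarith)
    by_cases fb : f = b
    · subst fb
      rw [hπb]
      simp only [hneg (u e)]
      exact key _ _ _ _ (by linarith)
    rw [hπc f fa fb]
  have hlt : (if (u a - u b) * (v (π a) - v (π b)) < 0 then 1 else 0) +
      (if (u (π a) - u (π b)) * (v a - v b) < 0 then 1 else 0) <
      (if (u a - u b) * (v a - v b) < 0 then 1 else 0) +
      (if (u (π a) - u (π b)) * (v (π a) - v (π b)) < 0 then 1 else 0) := by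
    rw [hπa, hπb, if_neg (by linarith), if_neg (by linarith), if_pos hab]
    split_ifs <;> omega
  have h1 := hcomm fun e f => if (u e - u f) * (v (π e) - v (π f)) < 0 then 1 else 0
  have h2 := hcomm fun e f => if (u e - u f) * (v e - v f) < 0 then 1 else 0
  simp only [hπ2] at h1
  have h3 := sum_lt_sum (fun e _ => sum_le_sum (s := S) fun f _ => hle e f)
    ⟨a, ha, sum_lt_sum (fun f _ => hle a f) ⟨b, hb, hlt⟩⟩
  simp only [sum_add_distrib] at h3
  omega

/-- The edges of the complete graph on `{0, …, n - 1}`. -/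
def edges (n : ℕ) : Finset (ℕ × ℕ) := {e ∈ range n ×ˢ range n | e.1 < e.2}

lemma mem_edges {n : ℕ} {e : ℕ × ℕ} : e ∈ edges n ↔ e.1 < e.2 ∧ e.2 < n := by
  simp only [edges, mem_filter, mem_product, mem_range]
  omega

/-- The edge `e` is present at the vertical line through the vertex `m`. -/
def Active (e : ℕ × ℕ) (m : ℕ) : Prop := e.1 ≤ m ∧ m ≤ e.2

/-- The vertex `m` is an endpoint of `e`. -/
def IsEnd (e : ℕ × ℕ) (m : ℕ) : Prop := m = e.1 ∨ m = e.2

/-- The heights of the edges at (or just to the right of) the vertices; distinct edges have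
distinct heights except at a common endpoint. -/
structure IsModel (n : ℕ) (h : ℕ × ℕ → ℕ → ℝ) : Prop where
  zero_of_isEnd : ∀ e ∈ edges n, ∀ m, IsEnd e m → h e m = 0
  isEnd_of_eq : ∀ e ∈ edges n, ∀ f ∈ edges n, e ≠ f → ∀ m, Active e m → Active f m →
    h e m = h f m → IsEnd e m ∧ IsEnd f m

/-- The edge `e` is present above the slab between the vertices `m` and `m + 1`. -/
def Spans (e : ℕ × ℕ) (m : ℕ) : Prop := Active e m ∧ Active e (m + 1)

/-- The edges `e` and `f` change their vertical order between the vertices `m` and `m + 1`. -/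
def Inverted (h : ℕ × ℕ → ℕ → ℝ) (m : ℕ) (e f : ℕ × ℕ) : Prop :=
  Spans e m ∧ Spans f m ∧ (h e m - h f m) * (h e (m + 1) - h f (m + 1)) < 0

lemma Inverted.symm {h : ℕ × ℕ → ℕ → ℝ} {m : ℕ} {e f : ℕ × ℕ} (hi : Inverted h m e f) :
    Inverted h m f e :=
  ⟨hi.2.1, hi.1, by have := hi.2.2; linarith⟩

lemma Inverted.ne {h : ℕ × ℕ → ℕ → ℝ} {m : ℕ} {e f : ℕ × ℕ} (hi : Inverted h m e f) : e ≠ f := by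
  rintro rfl
  simpa using hi.2.2

open Classical in
/-- The number of ordered pairs of edges inverted between the vertices `m` and `m + 1`. -/
noncomputable def slabCount (n : ℕ) (h : ℕ × ℕ → ℕ → ℝ) (m : ℕ) : ℕ :=
  ∑ e ∈ edges n, ∑ f ∈ edges n, if Inverted h m e f then 1 else 0

/-- The total number of inversions. -/
noncomputable def totalCount (n : ℕ) (h : ℕ × ℕ → ℕ → ℝ) : ℕ :=
  ∑ m ∈ range n, slabCount n h m

open Classical in
lemma slabCount_eq (n : ℕ) (h : ℕ × ℕ → ℕ → ℝ) (m : ℕ) :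
    slabCount n h m = ∑ e ∈ edges n with Spans e m, ∑ f ∈ edges n with Spans f m,
      if (h e m - h f m) * (h e (m + 1) - h f (m + 1)) < 0 then 1 else 0 := by
  unfold slabCount
  rw [sum_filter]
  refine sum_congr rfl fun e _ => ?_
  rw [sum_filter]
  by_cases he : Spans e m
  · rw [if_pos he]
    refine sum_congr rfl fun f _ => ?_
    by_cases hf : Spans f m <;> simp [Inverted, he, hf]
  · simp [Inverted, he]

open Classical in
/-- Swap the edges `e₀` and `f₀` at the vertices satisfying `P`. -/
noncomputable def swapOn (P : ℕ → Prop) (e₀ f₀ : ℕ × ℕ) (h : ℕ × ℕ → ℕ → ℝ) (e : ℕ × ℕ) (m : ℕ) :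
    ℝ :=
  if P m then h (Equiv.swap e₀ f₀ e) m else h e m

section Swap

variable {n s : ℕ} {h : ℕ × ℕ → ℕ → ℝ} {P : ℕ → Prop} {e₀ f₀ : ℕ × ℕ}

lemma swap_mem_edges (he : e₀ ∈ edges n) (hf : f₀ ∈ edges n) (e : ℕ × ℕ) :
    e ∈ edges n ↔ Equiv.swap e₀ f₀ e ∈ edges n := by
  rw [Equiv.swap_apply_def]
  split_ifs with h1 h2 <;> simp_all

lemma active_swap {m : ℕ} (hm : Active e₀ m ↔ Active f₀ m) (e : ℕ × ℕ) :
    Active (Equiv.swap e₀ f₀ e) m ↔ Active e m := by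
  rw [Equiv.swap_apply_def]
  split_ifs with h1 h2 <;> simp_all

lemma isEnd_swap {m : ℕ} (hm : IsEnd e₀ m ↔ IsEnd f₀ m) (e : ℕ × ℕ) :
    IsEnd (Equiv.swap e₀ f₀ e) m ↔ IsEnd e m := by
  rw [Equiv.swap_apply_def]
  split_ifs with h1 h2 <;> simp_all

lemma isModel_swapOn (hh : IsModel n h) (he : e₀ ∈ edges n) (hf : f₀ ∈ edges n)
    (hP : ∀ m, P m → (Active e₀ m ↔ Active f₀ m) ∧ (IsEnd e₀ m ↔ IsEnd f₀ m)) :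
    IsModel n (swapOn P e₀ f₀ h) where
  zero_of_isEnd e hen m hm := by
    unfold swapOn
    split_ifs with hPm
    · exact hh.zero_of_isEnd _ ((swap_mem_edges he hf e).1 hen) m
        ((isEnd_swap (hP m hPm).2 e).2 hm)
    · exact hh.zero_of_isEnd _ hen m hm
  isEnd_of_eq e hen f hfn hef m hem hfm := by
    unfold swapOn
    split_ifs with hPm
    · intro heq
      have := hh.isEnd_of_eq _ ((swap_mem_edges he hf e).1 hen) _ ((swap_mem_edges he hf f).1 hfn)
        (fun hc => hef ((Equiv.swap e₀ f₀).injective hc)) m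
        ((active_swap (hP m hPm).1 e).2 hem) ((active_swap (hP m hPm).1 f).2 hfm) heq
      rwa [isEnd_swap (hP m hPm).2, isEnd_swap (hP m hPm).2] at this
    · exact hh.isEnd_of_eq e hen f hfn hef m hem hfm

lemma totalCount_swapOn_lt (he : e₀ ∈ edges n) (hf : f₀ ∈ edges n)
    (hP : ∀ m, P m → (Active e₀ m ↔ Active f₀ m))
    (hPs : ∀ m, m ≠ s → (P m ↔ P (m + 1))) (hs : P s ↔ ¬ P (s + 1))
    (hinv : Inverted h s e₀ f₀) : totalCount n (swapOn P e₀ f₀ h) < totalCount n h := by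
  classical
  have hlt : slabCount n (swapOn P e₀ f₀ h) s < slabCount n h s := by
    rw [slabCount_eq, slabCount_eq]
    have hes : e₀ ∈ ({e ∈ edges n | Spans e s} : Finset _) := mem_filter.2 ⟨he, hinv.1⟩
    have hfs : f₀ ∈ ({e ∈ edges n | Spans e s} : Finset _) := mem_filter.2 ⟨hf, hinv.2.1⟩
    by_cases hPs' : P s
    · have := sum_inversions_swap_lt hes hfs (fun e => h e (s + 1)) (fun e => h e s)
        (by have := hinv.2.2; linarith)
      simp only [swapOn, hPs', hs.1 hPs', if_true, if_false]
      simpa only [mul_comm] using this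
    · have := sum_inversions_swap_lt hes hfs (fun e => h e s) (fun e => h e (s + 1)) hinv.2.2
      have hPs'' : P (s + 1) := by tauto
      simpa only [swapOn, hPs', hPs'', if_true, if_false] using this
  have heq : ∀ m, m ≠ s → slabCount n (swapOn P e₀ f₀ h) m = slabCount n h m := by
    intro m hm
    by_cases hPm : P m
    · have hPm' := (hPs m hm).1 hPm
      unfold slabCount
      refine sum_equiv (Equiv.swap e₀ f₀) (swap_mem_edges he hf) fun e _ =>
        sum_equiv (Equiv.swap e₀ f₀) (swap_mem_edges he hf) fun f _ => ?_
      simp only [Inverted, Spans, swapOn, hPm, hPm', if_true, active_swap (hP _ hPm),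
        active_swap (hP _ hPm')]
    · have hPm' : ¬ P (m + 1) := fun hc => hPm ((hPs m hm).2 hc)
      simp only [slabCount_eq, swapOn, hPm, hPm', if_false]
  refine sum_lt_sum (fun m _ => ?_) ⟨s, ?_, hlt⟩
  · by_cases hm : m = s
    · exact hm ▸ hlt.le
    · exact (heq m hm).le
  · have h1 := hinv.1.2.2
    have h2 := (mem_edges.1 he).2
    rw [mem_range]
    omega

end Swap

/-- Removing all inversions of adjacent edges does not increase the number of inversions. -/
theorem exists_isModel_forall_not_inverted {n : ℕ} {h : ℕ × ℕ → ℕ → ℝ} (hh : IsModel n h) :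
    ∃ h', IsModel n h' ∧ totalCount n h' ≤ totalCount n h ∧ ∀ e ∈ edges n, ∀ f ∈ edges n,
      (e.1 = f.1 ∨ e.2 = f.2) → ∀ m, ¬ Inverted h' m e f := by
  induction hN : totalCount n h using Nat.strong_induction_on generalizing h with
  | _ N ih =>
    by_cases hgood : ∀ e ∈ edges n, ∀ f ∈ edges n, (e.1 = f.1 ∨ e.2 = f.2) →
        ∀ m, ¬ Inverted h m e f
    · exact ⟨h, hh, hN.le, hgood⟩
    · push Not at hgood
      obtain ⟨e, he, f, hf, hef, s, hinv⟩ := hgood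
      obtain ⟨P, hP, hPs, hs⟩ : ∃ P : ℕ → Prop,
          (∀ m, P m → (Active e m ↔ Active f m) ∧ (IsEnd e m ↔ IsEnd f m)) ∧
          (∀ m, m ≠ s → (P m ↔ P (m + 1))) ∧ (P s ↔ ¬ P (s + 1)) := by
        obtain ⟨⟨⟨h1, h2⟩, h3, h4⟩, ⟨⟨h5, h6⟩, h7, h8⟩, -⟩ := hinv
        rcases hef with hef | hef
        · refine ⟨fun m => m ≤ s, fun m hm => ?_, fun m hm => ?_, ?_⟩
          · unfold Active IsEnd
            omega
          · omega
          · omega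
        · refine ⟨fun m => s + 1 ≤ m, fun m hm => ?_, fun m hm => ?_, ?_⟩
          · unfold Active IsEnd
            omega
          · omega
          · omega
      have hlt := totalCount_swapOn_lt he hf (fun m hm => (hP m hm).1) hPs hs hinv
      obtain ⟨h', h1, h2, h3⟩ := ih _ (hN ▸ hlt) (isModel_swapOn hh he hf hP) rfl
      exact ⟨h', h1, by omega, h3⟩

lemma pos_iff_pos_of_forall_not_neg {g : ℕ → ℝ} {p q : ℕ} (hpq : p ≤ q)
    (hne : ∀ m, p ≤ m → m ≤ q → g m ≠ 0) (hno : ∀ m, p ≤ m → m < q → ¬ g m * g (m + 1) < 0) :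
    0 < g p ↔ 0 < g q := by
  induction q, hpq using Nat.le_induction with
  | base => rfl
  | succ q hpq ih =>
    rw [ih (fun m h1 h2 => hne m h1 (by omega)) (fun m h1 h2 => hno m h1 (by omega))]
    have h1 := hno q hpq (by omega)
    have h2 := hne q hpq (by omega)
    have h3 := hne (q + 1) (by omega) le_rfl
    rw [mul_neg_iff] at h1
    grind

namespace IsModel

variable {n : ℕ} {h : ℕ × ℕ → ℕ → ℝ}

lemma ne_zero (hh : IsModel n h) {i m j : ℕ} (him : i < m) (hmj : m < j) (hj : j < n) :
    h (i, j) m ≠ 0 := by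
  intro h0
  have h1 := hh.zero_of_isEnd (i, m) (mem_edges.2 ⟨him, by simp; omega⟩) m (Or.inr rfl)
  have h2 := hh.isEnd_of_eq (i, j) (mem_edges.2 ⟨by simp; omega, hj⟩) (i, m)
    (mem_edges.2 ⟨him, by simp; omega⟩) (by simp; omega) m ⟨by simp; omega, by simp; omega⟩
    ⟨by simp; omega, by simp⟩ (h0.trans h1.symm)
  have := h2.1
  simp only [IsEnd] at this
  omega

/-- Two edges without inversions on `[p, q]`, where they have at most one end at a time, keep
their order. -/
lemma lt_iff_lt (hh : IsModel n h) {e f : ℕ × ℕ} (he : e ∈ edges n) (hf : f ∈ edges n)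
    (hno : ∀ m, ¬ Inverted h m e f) {p q : ℕ} (hpq : p ≤ q) (hef : e ≠ f)
    (hep : e.1 ≤ p) (hfp : f.1 ≤ p) (heq : q ≤ e.2) (hfq : q ≤ f.2)
    (hend : ∀ m, p ≤ m → m ≤ q → ¬ (IsEnd e m ∧ IsEnd f m)) :
    h f p < h e p ↔ h f q < h e q := by
  have := pos_iff_pos_of_forall_not_neg (g := fun m => h e m - h f m) hpq
    (fun m h1 h2 h3 => hend m h1 h2 (hh.isEnd_of_eq e he f hf hef m ⟨by omega, by omega⟩
      ⟨by omega, by omega⟩ (sub_eq_zero.1 h3)))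
    (fun m h1 h2 h3 => hno m ⟨⟨⟨by omega, by omega⟩, ⟨by omega, by omega⟩⟩,
      ⟨⟨by omega, by omega⟩, ⟨by omega, by omega⟩⟩, h3⟩)
  simpa only [sub_pos] using this

end IsModel

/-- The signature of a system of heights. -/
noncomputable def signature (h : ℕ × ℕ → ℕ → ℝ) (i m j : ℕ) : Bool := decide (0 < h (i, j) m)

theorem admissible_signature {n : ℕ} {h : ℕ × ℕ → ℕ → ℝ} (hh : IsModel n h)
    (hno : ∀ e ∈ edges n, ∀ f ∈ edges n, (e.1 = f.1 ∨ e.2 = f.2) → ∀ m, ¬ Inverted h m e f) :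
    Admissible (signature h) n := by
  have hright : ∀ i j k, i < j → j < k → k < n →
      (signature h i j k = true ↔ h (i, j) (i + 1) < h (i, k) (i + 1)) ∧
      h (i, j) (i + 1) ≠ h (i, k) (i + 1) := by
    intro i j k hij hjk hk
    have he : (i, k) ∈ edges n := mem_edges.2 ⟨by simp; omega, hk⟩
    have hf : (i, j) ∈ edges n := mem_edges.2 ⟨hij, by simp; omega⟩
    have hne : (i, k) ≠ (i, j) := by simp; omega
    refine ⟨?_, fun h0 => ?_⟩
    · rw [hh.lt_iff_lt he hf (hno _ he _ hf (Or.inl rfl)) (show i + 1 ≤ j by omega) hne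
        (by simp) (by simp) (by simp; omega) (by simp)
        (fun m h1 h2 => by simp only [IsEnd]; omega), hh.zero_of_isEnd _ hf j (Or.inr rfl)]
      simp [signature]
    · have := hh.isEnd_of_eq _ he _ hf hne (i + 1) ⟨by simp, by simp; omega⟩
        ⟨by simp, by simp; omega⟩ h0.symm
      simp only [IsEnd] at this
      omega
  have hleft : ∀ i j k, i < j → j < k → k < n →
      (signature h i j k = true ↔ h (j, k) (k - 1) < h (i, k) (k - 1)) ∧
      h (j, k) (k - 1) ≠ h (i, k) (k - 1) := by
    intro i j k hij hjk hk
    have he : (i, k) ∈ edges n := mem_edges.2 ⟨by simp; omega, hk⟩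
    have hf : (j, k) ∈ edges n := mem_edges.2 ⟨hjk, by simp; omega⟩
    have hne : (i, k) ≠ (j, k) := by simp; omega
    refine ⟨?_, fun h0 => ?_⟩
    · rw [← hh.lt_iff_lt he hf (hno _ he _ hf (Or.inr rfl)) (show j ≤ k - 1 by omega) hne
        (by simp; omega) (by simp) (by simp) (by simp)
        (fun m h1 h2 => by simp only [IsEnd]; omega), hh.zero_of_isEnd _ hf j (Or.inl rfl)]
      simp [signature]
    · have := hh.isEnd_of_eq _ he _ hf hne (k - 1) ⟨by simp; omega, by simp⟩
        ⟨by simp; omega, by simp⟩ h0.symm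
      simp only [IsEnd] at this
      omega
  intro a b c d hab hbc hcd hd
  have h1 := hright a b c hab hbc (by omega)
  have h2 := hright a c d (by omega) hcd hd
  have h3 := hright a b d hab (by omega) hd
  have h4 := hleft a b d hab (by omega) hd
  have h5 := hleft b c d hbc hcd hd
  have h6 := hleft a c d (by omega) hcd hd
  grind

lemma exists_inverted_of_eq {n : ℕ} {h : ℕ × ℕ → ℕ → ℝ} (hh : IsModel n h) {a b c d : ℕ}
    (hab : a < b) (hbc : b < c) (hcd : c < d) (hd : d < n)
    (hσ : signature h a b c = signature h b c d) : ∃ m, Inverted h m (a, c) (b, d) := by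
  by_contra! hno
  have he : (a, c) ∈ edges n := mem_edges.2 ⟨by simp; omega, by simp; omega⟩
  have hf : (b, d) ∈ edges n := mem_edges.2 ⟨by simp; omega, by simp; omega⟩
  have := hh.lt_iff_lt he hf hno hbc.le (by simp; omega) (by simp; omega) (by simp) (by simp)
    (by simp; omega) (fun m h1 h2 => by simp only [IsEnd]; omega)
  rw [hh.zero_of_isEnd _ hf b (Or.inl rfl), hh.zero_of_isEnd _ he c (Or.inr rfl)] at this
  have h1 := hh.ne_zero hbc hcd hd
  simp only [signature, decide_eq_decide] at hσ
  grind

lemma exists_inverted_of_ne {n : ℕ} {h : ℕ × ℕ → ℕ → ℝ} (hh : IsModel n h) {a b c d : ℕ}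
    (hab : a < b) (hbc : b < c) (hcd : c < d) (hd : d < n)
    (hσ : signature h a b d ≠ signature h a c d) : ∃ m, Inverted h m (a, d) (b, c) := by
  by_contra! hno
  have he : (a, d) ∈ edges n := mem_edges.2 ⟨by simp; omega, by simp; omega⟩
  have hf : (b, c) ∈ edges n := mem_edges.2 ⟨by simp; omega, by simp; omega⟩
  have := hh.lt_iff_lt he hf hno hbc.le (by simp; omega) (by simp; omega) (by simp) (by simp; omega)
    (by simp) (fun m h1 h2 => by simp only [IsEnd]; omega)
  rw [hh.zero_of_isEnd _ hf b (Or.inl rfl), hh.zero_of_isEnd _ hf c (Or.inr rfl)] at this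
  simp [signature, this] at hσ

lemma quadSum_le_quadSum {n : ℕ} {F G : ℕ → ℕ → ℕ → ℕ → ℤ}
    (h : ∀ a b c d, a < b → b < c → c < d → d < n → F a b c d ≤ G a b c d) :
    quadSum n F ≤ quadSum n G := by
  refine sum_le_sum fun a _ => sum_le_sum fun b _ => sum_le_sum fun c _ =>
    sum_le_sum fun d hd => ?_
  split_ifs with hc
  · exact h a b c d hc.1 hc.2.1 hc.2.2 (mem_range.1 hd)
  · rfl

lemma sum_edges {M : Type*} [AddCommMonoid M] (n : ℕ) (F : ℕ × ℕ → M) :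
    ∑ e ∈ edges n, F e = ∑ i ∈ range n, ∑ j ∈ range n, if i < j then F (i, j) else 0 := by
  rw [edges, sum_filter, sum_product]

open Classical in
/-- The number of slabs in which `e` and `f` are inverted. -/
noncomputable def inversions (n : ℕ) (h : ℕ × ℕ → ℕ → ℝ) (e f : ℕ × ℕ) : ℕ :=
  #{m ∈ range n | Inverted h m e f}

lemma totalCount_eq (n : ℕ) (h : ℕ × ℕ → ℕ → ℝ) :
    totalCount n h = ∑ e ∈ edges n, ∑ f ∈ edges n, inversions n h e f := by
  classical
  unfold totalCount slabCount inversions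
  simp only [card_filter]
  rw [sum_comm]
  exact sum_congr rfl fun e _ => sum_comm

lemma inversions_pos {n : ℕ} {h : ℕ × ℕ → ℕ → ℝ} {e f : ℕ × ℕ} (he : e ∈ edges n)
    (hi : ∃ m, Inverted h m e f) : 1 ≤ inversions n h e f := by
  classical
  obtain ⟨m, hm⟩ := hi
  refine card_pos.2 ⟨m, mem_filter.2 ⟨mem_range.2 ?_, hm⟩⟩
  have h1 := hm.1.2.2
  have h2 := (mem_edges.1 he).2
  omega

theorem two_mul_quadSum_le_totalCount {n : ℕ} {h : ℕ × ℕ → ℕ → ℝ} (hh : IsModel n h) :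
    2 * quadSum n (oddPairs (signature h)) ≤ totalCount n h := by
  calc 2 * quadSum n (oddPairs (signature h))
      ≤ quadSum n (fun a b c d => (inversions n h (a, b) (c, d) : ℤ) +
          (inversions n h (a, c) (b, d) : ℤ) + (inversions n h (a, d) (b, c) : ℤ) +
          (inversions n h (b, c) (a, d) : ℤ) + (inversions n h (b, d) (a, c) : ℤ) +
          (inversions n h (c, d) (a, b) : ℤ)) := by
        rw [← quadSum_const_mul]
        refine quadSum_le_quadSum fun a b c d hab hbc hcd hd => ?_
        have e1 : (a, c) ∈ edges n := mem_edges.2 ⟨by simp; omega, by simp; omega⟩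
        have e2 : (b, d) ∈ edges n := mem_edges.2 ⟨by simp; omega, by simp; omega⟩
        have e3 : (a, d) ∈ edges n := mem_edges.2 ⟨by simp; omega, by simp; omega⟩
        have e4 : (b, c) ∈ edges n := mem_edges.2 ⟨by simp; omega, by simp; omega⟩
        have h1 := exists_inverted_of_eq hh hab hbc hcd hd
        have h2 := exists_inverted_of_ne hh hab hbc hcd hd
        have h3 := fun hs => inversions_pos e1 (h1 hs)
        have h4 := fun hs => inversions_pos e2 ((h1 hs).imp fun _ => Inverted.symm)
        have h5 := fun hs => inversions_pos e3 (h2 hs)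
        have h6 := fun hs => inversions_pos e4 ((h2 hs).imp fun _ => Inverted.symm)
        unfold oddPairs
        split_ifs with h7 h8 h8
        · have := h3 h7; have := h4 h7; have := h5 h8; have := h6 h8; omega
        · have := h3 h7; have := h4 h7; omega
        · have := h5 h8; have := h6 h8; omega
        · omega
    _ = ∑ i ∈ range n, ∑ j ∈ range n, ∑ k ∈ range n, ∑ l ∈ range n,
        (if i < j ∧ k < l ∧ i ≠ k ∧ i ≠ l ∧ j ≠ k ∧ j ≠ l then
          (inversions n h (i, j) (k, l) : ℤ) else 0) :=
        (sum_two_pairs n fun i j k l => (inversions n h (i, j) (k, l) : ℤ)).symm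
    _ ≤ _ := by
        rw [totalCount_eq, sum_edges]
        push_cast
        refine sum_le_sum fun i _ => sum_le_sum fun j _ => ?_
        by_cases hij : i < j
        · rw [if_pos hij, sum_edges]
          refine sum_le_sum fun k _ => sum_le_sum fun l _ => ?_
          split_ifs <;> omega
        · simp [hij]

/-- Hill's bound for systems of heights. -/
theorem two_mul_Zval_le_totalCount {n : ℕ} {h : ℕ × ℕ → ℕ → ℝ} (hh : IsModel n h) :
    2 * Zval n ≤ totalCount n h := by
  obtain ⟨h', hh', hle, hno⟩ := exists_isModel_forall_not_inverted hh
  have h1 := Zval_le_quadSum_oddPairs (admissible_signature hh' hno)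
  have h2 := two_mul_quadSum_le_totalCount hh'
  omega

lemma exists_zero_of_mul_neg {G : ℝ → ℝ} {a b : ℝ} (hab : a < b)
    (hG : ContinuousOn G (Set.Icc a b)) (h : G a * G b < 0) : ∃ t, a < t ∧ t < b ∧ G t = 0 := by
  rcases mul_neg_iff.1 h with h | h
  · obtain ⟨t, ht, h0⟩ := intermediate_value_Ioo' hab.le hG ⟨h.2, h.1⟩
    exact ⟨t, ht.1, ht.2, h0⟩
  · obtain ⟨t, ht, h0⟩ := intermediate_value_Ioo hab.le hG ⟨h.1, h.2⟩
    exact ⟨t, ht.1, ht.2, h0⟩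

lemma sum_fin_quadruples (n : ℕ) (F : ℕ → ℕ → ℕ → ℕ → ℕ) :
    ∑ p : (Fin n × Fin n) × (Fin n × Fin n), F p.1.1 p.1.2 p.2.1 p.2.2 =
      ∑ i ∈ range n, ∑ j ∈ range n, ∑ k ∈ range n, ∑ l ∈ range n, F i j k l := by
  simp only [Fintype.sum_prod_type, Finset.sum_range]

section Drawing

variable {n : ℕ} [NeZero n] (D : XMonotoneDrawing n)

/-- The abscissa of the vertex `m`. -/
def abscissa (m : ℕ) : ℝ := D.x (Fin.ofNat n m)

/-- The height of the edge `e` above the abscissa `t`. -/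
def height (e : ℕ × ℕ) (t : ℝ) : ℝ := D.e (Fin.ofNat n e.1) (Fin.ofNat n e.2) t

lemma ofNat_lt_ofNat {i j : ℕ} (hij : i < j) (hj : j < n) : Fin.ofNat n i < Fin.ofNat n j := by
  rw [Fin.lt_def]
  simp [Nat.mod_eq_of_lt hj, Nat.mod_eq_of_lt (hij.trans hj), hij]

lemma abscissa_lt {i j : ℕ} (hij : i < j) (hj : j < n) : abscissa D i < abscissa D j :=
  D.x_strictMono (ofNat_lt_ofNat hij hj)

lemma abscissa_le {i j : ℕ} (hij : i ≤ j) (hj : j < n) : abscissa D i ≤ abscissa D j := by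
  rcases hij.eq_or_lt with rfl | h
  · exact le_rfl
  · exact (abscissa_lt D h hj).le

lemma ofNat_pair_ne {e f : ℕ × ℕ} (he : e ∈ edges n) (hf : f ∈ edges n) (hef : e ≠ f) :
    (Fin.ofNat n e.1, Fin.ofNat n e.2) ≠ (Fin.ofNat n f.1, Fin.ofNat n f.2) := by
  rw [mem_edges] at he hf
  intro h
  simp only [Prod.mk.injEq, Fin.ext_iff, Fin.val_ofNat] at h
  rw [Nat.mod_eq_of_lt he.2, Nat.mod_eq_of_lt hf.2, Nat.mod_eq_of_lt (he.1.trans he.2),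
    Nat.mod_eq_of_lt (hf.1.trans hf.2)] at h
  exact hef (Prod.ext h.1 h.2)

lemma height_continuousOn {e : ℕ × ℕ} (he : e ∈ edges n) :
    ContinuousOn (height D e) (Set.Icc (abscissa D e.1) (abscissa D e.2)) :=
  D.cont _ _ (ofNat_lt_ofNat (mem_edges.1 he).1 (mem_edges.1 he).2)

lemma height_of_isEnd {e : ℕ × ℕ} (he : e ∈ edges n) {m : ℕ} (hm : IsEnd e m) :
    height D e (abscissa D m) = 0 := by
  have hlt := ofNat_lt_ofNat (mem_edges.1 he).1 (mem_edges.1 he).2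
  rcases hm with rfl | rfl
  · exact D.end_left _ _ hlt
  · exact D.end_right _ _ hlt

open Filter Topology in
/-- A line just to the right of the vertex `m` at which all the edges passing over or below `m`
have distinct heights. -/
lemma exists_generic_abscissa {m : ℕ} (hm : m < n) : ∃ y, abscissa D m < y ∧
    (m + 1 < n → y < abscissa D (m + 1)) ∧
    (∀ e ∈ edges n, e.1 < m → m < e.2 → 0 < height D e (abscissa D m) * height D e y) ∧
    (∀ e ∈ edges n, ∀ f ∈ edges n, e ≠ f → e.1 < m → m < e.2 → f.1 < m → m < f.2 →
      height D e y ≠ height D f y) := by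
  have h1 : ∀ᶠ y in 𝓝[>] (abscissa D m), abscissa D m < y := self_mem_nhdsWithin
  have h2 : ∀ᶠ y in 𝓝[>] (abscissa D m), m + 1 < n → y < abscissa D (m + 1) := by
    by_cases hm' : m + 1 < n
    · filter_upwards [Ioo_mem_nhdsGT (abscissa_lt D (Nat.lt_succ_self m) hm')] with y hy _
      exact hy.2
    · exact Eventually.of_forall fun y h => absurd h hm'
  have h3 : ∀ᶠ y in 𝓝[>] (abscissa D m), ∀ e ∈ edges n, e.1 < m → m < e.2 →
      0 < height D e (abscissa D m) * height D e y := by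
    rw [eventually_all_finset]
    intro e he
    by_cases hem : e.1 < m ∧ m < e.2
    · have hen := (mem_edges.1 he).2
      have hne : height D e (abscissa D m) ≠ 0 :=
        D.avoid_vertex _ _ _ (ofNat_lt_ofNat hem.1 hm) (ofNat_lt_ofNat hem.2 hen)
      have hc : ContinuousAt (height D e) (abscissa D m) :=
        (height_continuousOn D he).continuousAt
          (Icc_mem_nhds (abscissa_lt D hem.1 hm) (abscissa_lt D hem.2 hen))
      have := (hc.const_mul (height D e (abscissa D m))).eventually
        (lt_mem_nhds (mul_self_pos.2 hne))
      filter_upwards [this.filter_mono nhdsWithin_le_nhds] with y hy _ _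
      exact hy
    · exact Eventually.of_forall fun y h h' => absurd ⟨h, h'⟩ hem
  have h4 : ∀ᶠ y in 𝓝[>] (abscissa D m), ∀ e ∈ edges n, ∀ f ∈ edges n, e ≠ f → e.1 < m →
      m < e.2 → f.1 < m → m < f.2 → height D e y ≠ height D f y := by
    rw [eventually_all_finset]
    intro e he
    rw [eventually_all_finset]
    intro f hf
    by_cases hef : e ≠ f ∧ e.1 < m ∧ m < e.2 ∧ f.1 < m ∧ m < f.2
    · obtain ⟨hef, he1, he2, hf1, hf2⟩ := hef
      have hen := (mem_edges.1 he).2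
      have hfn := (mem_edges.1 hf).2
      have hfin := D.cross_finite _ _ _ _ (ofNat_lt_ofNat (mem_edges.1 he).1 hen)
        (ofNat_lt_ofNat (mem_edges.1 hf).1 hfn) (ofNat_pair_ne he hf hef)
      have hcl := (hfin.subset (Set.sdiff_subset (t := {abscissa D m}))).isClosed
      have h5 := hcl.compl_mem_nhds (x := abscissa D m) (by simp)
      have h6 : Set.Ioo (abscissa D m) (min (abscissa D e.2) (abscissa D f.2)) ∈
          𝓝[>] (abscissa D m) :=
        Ioo_mem_nhdsGT (lt_min (abscissa_lt D he2 hen) (abscissa_lt D hf2 hfn))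
      filter_upwards [mem_nhdsWithin_of_mem_nhds h5, h6] with y hy1 hy2 _ _ _ _ _ heq
      refine hy1 ⟨⟨?_, hy2.2, heq⟩, hy2.1.ne'⟩
      exact (max_lt (abscissa_lt D he1 hm) (abscissa_lt D hf1 hm)).trans hy2.1
    · exact Eventually.of_forall fun y _ _ _ _ _ => absurd ⟨‹_›, ‹_›, ‹_›, ‹_›, ‹_›⟩ hef
  exact (((h1.and h2).and (h3.and h4)).exists).imp fun y hy => ⟨hy.1.1, hy.1.2, hy.2.1, hy.2.2⟩

/-- The number of inversions of two edges is at most the number of their crossings. -/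
lemma exists_isModel_inversions_le : ∃ h, IsModel n h ∧ ∀ e ∈ edges n, ∀ f ∈ edges n, e ≠ f →
    inversions n h e f ≤ D.crossCount (Fin.ofNat n e.1) (Fin.ofNat n e.2) (Fin.ofNat n f.1)
      (Fin.ofNat n f.2) := by
  classical
  choose! y hy1 hy2 hy3 hy4 using fun m (hm : m < n) => exists_generic_abscissa D hm
  set h : ℕ × ℕ → ℕ → ℝ := fun e m => if IsEnd e m then 0 else height D e (y m) with hh
  have hpass : ∀ e m, Active e m → ¬ IsEnd e m → e.1 < m ∧ m < e.2 := by
    intro e m h1 h2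
    unfold Active at h1
    unfold IsEnd at h2
    omega
  have hactive : ∀ e ∈ edges n, ∀ m, Active e m → m < n := fun e he m hm =>
    hm.2.trans_lt (mem_edges.1 he).2
  have hend : ∀ e m, IsEnd e m → h e m = 0 := fun e m hm => if_pos hm
  have hnend : ∀ e m, ¬ IsEnd e m → h e m = height D e (y m) := fun e m hm => if_neg hm
  have hne0 : ∀ e ∈ edges n, ∀ m, Active e m → ¬ IsEnd e m →
      0 < height D e (abscissa D m) * h e m := by
    intro e he m hm hm'
    rw [hnend e m hm']
    exact hy3 m (hactive e he m hm) e he (hpass e m hm hm').1 (hpass e m hm hm').2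
  refine ⟨h, ⟨fun e _ => hend e, fun e he f hf hef m hem hfm heq => ?_⟩,
    fun e he f hf hef => ?_⟩
  · by_cases h1 : IsEnd e m <;> by_cases h2 : IsEnd f m
    · exact ⟨h1, h2⟩
    · have := hne0 f hf m hfm h2
      rw [← heq, hend e m h1, mul_zero] at this
      exact absurd this (lt_irrefl 0)
    · have := hne0 e he m hem h1
      rw [heq, hend f m h2, mul_zero] at this
      exact absurd this (lt_irrefl 0)
    · rw [hnend e m h1, hnend f m h2] at heq
      exact absurd heq (hy4 m (hactive e he m hem) e he f hf hef (hpass e m hem h1).1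
        (hpass e m hem h1).2 (hpass f m hfm h2).1 (hpass f m hfm h2).2)
  · set τ : ℕ → ℝ := fun m => if IsEnd e m ∨ IsEnd f m then abscissa D m else y m with hτ
    have hτ1 : ∀ m, m < n → abscissa D m ≤ τ m := by
      intro m hm
      simp only [hτ]
      split_ifs
      · exact le_rfl
      · exact (hy1 m hm).le
    have hτ2 : ∀ m, m + 1 < n → τ m < abscissa D (m + 1) := by
      intro m hm
      simp only [hτ]
      split_ifs
      · exact abscissa_lt D (Nat.lt_succ_self m) hm
      · exact hy2 m (by omega) hm
    have hτ3 : ∀ m m', m < m' → m' < n → τ m < τ m' := fun m m' hmm hm' =>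
      (hτ2 m (by omega)).trans_le ((abscissa_le D hmm hm').trans (hτ1 m' hm'))
    have hτ4 : ∀ m, Active e m → Active f m → τ m ≤ min (abscissa D e.2) (abscissa D f.2) := by
      intro m hem hfm
      have hen := (mem_edges.1 he).2
      have hfn := (mem_edges.1 hf).2
      by_cases hm : IsEnd e m ∨ IsEnd f m
      · simp only [hτ, if_pos hm]
        exact le_min (abscissa_le D hem.2 hen) (abscissa_le D hfm.2 hfn)
      · have h1 := hpass e m hem fun h => hm (Or.inl h)
        have h2 := hpass f m hfm fun h => hm (Or.inr h)
        exact (hτ2 m (by omega)).le.trans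
          (le_min (abscissa_le D h1.2 hen) (abscissa_le D h2.2 hfn))
    have hsign : ∀ m, Active e m → Active f m → h e m - h f m ≠ 0 →
        0 < (height D e (τ m) - height D f (τ m)) * (h e m - h f m) := by
      intro m hem hfm hd
      by_cases h1 : IsEnd e m <;> by_cases h2 : IsEnd f m
      · simp [hend e m h1, hend f m h2] at hd
      · have := hne0 f hf m hfm h2
        simp only [hτ, h1, true_or, if_true, height_of_isEnd D he h1, hend e m h1]
        linarith
      · have := hne0 e he m hem h1
        simp only [hτ, h2, or_true, if_true, height_of_isEnd D hf h2, hend f m h2]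
        linarith
      · rw [hnend e m h1, hnend f m h2] at hd ⊢
        simp only [hτ, h1, h2, or_self, if_false]
        exact mul_self_pos.2 hd
    have hcross : ∀ m, Inverted h m e f → ∃ t, τ m < t ∧ t < τ (m + 1) ∧
        t ∈ D.crossSet (Fin.ofNat n e.1) (Fin.ofNat n e.2) (Fin.ofNat n f.1)
          (Fin.ofNat n f.2) := by
      rintro m ⟨⟨he1, he2⟩, ⟨hf1, hf2⟩, hneg⟩
      have hm : m + 1 < n := hactive e he _ he2
      have hlow : max (abscissa D e.1) (abscissa D f.1) ≤ τ m :=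
        (max_le (abscissa_le D he1.1 (by omega)) (abscissa_le D hf1.1 (by omega))).trans
          (hτ1 m (by omega))
      have hhigh := hτ4 (m + 1) he2 hf2
      have hG : ContinuousOn (fun t => height D e t - height D f t)
          (Set.Icc (τ m) (τ (m + 1))) :=
        ((height_continuousOn D he).mono (Set.Icc_subset_Icc ((le_max_left _ _).trans hlow)
          (hhigh.trans (min_le_left _ _)))).sub
        ((height_continuousOn D hf).mono (Set.Icc_subset_Icc ((le_max_right _ _).trans hlow)
          (hhigh.trans (min_le_right _ _))))
      have h1 := hsign m he1 hf1 (left_ne_zero_of_mul hneg.ne)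
      have h2 := hsign (m + 1) he2 hf2 (right_ne_zero_of_mul hneg.ne)
      obtain ⟨t, ht1, ht2, ht3⟩ := exists_zero_of_mul_neg (hτ3 m (m + 1) (by omega) hm) hG
        (by
          have := mul_pos h1 h2
          by_contra! hc
          have := mul_nonpos_of_nonneg_of_nonpos hc hneg.le
          linarith)
      exact ⟨t, ht1, ht2, hlow.trans_lt ht1, ht2.trans_le hhigh, sub_eq_zero.1 ht3⟩
    choose! t ht1 ht2 ht3 using hcross
    unfold inversions XMonotoneDrawing.crossCount
    rw [← Set.ncard_coe_finset]
    refine Set.ncard_le_ncard_of_injOn t (fun m hm => ht3 m (mem_filter.1 hm).2) ?_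
      (D.cross_finite _ _ _ _ (ofNat_lt_ofNat (mem_edges.1 he).1 (mem_edges.1 he).2)
        (ofNat_lt_ofNat (mem_edges.1 hf).1 (mem_edges.1 hf).2) (ofNat_pair_ne he hf hef))
    have hlt : ∀ m m', Inverted h m e f → Inverted h m' e f → m < m' → t m < t m' := by
      intro m m' hm hm' hmm
      refine (ht2 m hm).trans_le (le_trans ?_ (ht1 m' hm').le)
      rcases (show m + 1 ≤ m' from hmm).eq_or_lt with heq | hlt
      · rw [heq]
      · exact (hτ3 _ _ hlt (hactive e he _ hm'.1.1)).le
    intro m hm m' hm' heq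
    have hm := (mem_filter.1 hm).2
    have hm' := (mem_filter.1 hm').2
    rcases lt_trichotomy m m' with hc | hc | hc
    · exact absurd heq (hlt m m' hm hm' hc).ne
    · exact hc
    · exact absurd heq.symm (hlt m' m hm' hm hc).ne

/-- Hill's bound holds for all monotone drawings. -/
theorem Zval_le_cr : Zval n ≤ D.cr := by
  classical
  obtain ⟨h, hh, hle⟩ := exists_isModel_inversions_le D
  have h1 := two_mul_Zval_le_totalCount hh
  have hself : ∀ e, inversions n h e e = 0 := by
    intro e
    exact card_eq_zero.2 (filter_eq_empty_iff.2 fun m _ hm => hm.ne rfl)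
  have h2 : totalCount n h ≤ ∑ p : (Fin n × Fin n) × (Fin n × Fin n),
      if p.1.1 < p.1.2 ∧ p.2.1 < p.2.2 ∧ p.1 ≠ p.2 then
        D.crossCount p.1.1 p.1.2 p.2.1 p.2.2 else 0 := by
    calc totalCount n h = ∑ i ∈ range n, ∑ j ∈ range n, ∑ k ∈ range n, ∑ l ∈ range n,
          if i < j ∧ k < l then inversions n h (i, j) (k, l) else 0 := by
          rw [totalCount_eq, sum_edges]
          refine sum_congr rfl fun i _ => sum_congr rfl fun j _ => ?_
          by_cases hij : i < j
          · simp only [hij, if_true, true_and, sum_edges]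
          · simp [hij]
      _ = ∑ p : (Fin n × Fin n) × (Fin n × Fin n), if (p.1.1 : ℕ) < p.1.2 ∧ (p.2.1 : ℕ) < p.2.2
          then inversions n h (p.1.1, p.1.2) (p.2.1, p.2.2) else 0 :=
          (sum_fin_quadruples n fun i j k l => if i < j ∧ k < l then
            inversions n h (i, j) (k, l) else 0).symm
      _ ≤ _ := by
          refine sum_le_sum fun p _ => ?_
          obtain ⟨⟨i, j⟩, k, l⟩ := p
          simp only [Fin.val_fin_lt]
          by_cases hp : i < j ∧ k < l
          · by_cases hne : (i, j) = (k, l)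
            · obtain ⟨rfl, rfl⟩ := Prod.ext_iff.1 hne
              simp [hself]
            · have := hle (i, j) (mem_edges.2 ⟨hp.1, j.2⟩) (k, l) (mem_edges.2 ⟨hp.2, l.2⟩)
                (fun hc => hne (by
                  simp only [Prod.mk.injEq, Fin.val_inj] at hc
                  exact Prod.ext hc.1 hc.2))
              rw [if_pos hp, if_pos ⟨hp.1, hp.2, hne⟩]
              simpa using this
          · rw [if_neg hp]
            exact Nat.zero_le _
  unfold XMonotoneDrawing.cr
  omega

end Drawing

section TwoPage

/-- The sign of a page. -/
def pageSign (s : Bool) : ℤ := if s then 1 else -1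

lemma pageSign_mul_self (s : Bool) : (pageSign s : ℝ) * pageSign s = 1 := by
  cases s <;> simp [pageSign]

lemma eq_of_pageSign_mul_eq {s s' : Bool} {a b : ℝ} (ha : 0 < a) (hb : 0 < b)
    (h : (pageSign s : ℝ) * a = pageSign s' * b) : s = s' ∧ a = b := by
  cases s <;> cases s' <;> simp [pageSign] at h ⊢ <;> linarith

variable (s : ℕ → Bool)

/-- The edge `{i, j}` drawn as a parabola on the page determined by `i + j`. -/
def parabola (i j : ℕ) (t : ℝ) : ℝ := pageSign (s (i + j)) * ((t - i) * (j - t))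

lemma eq_of_parabola_eq {i j k l : ℕ} {t : ℝ} (hi : (i : ℝ) < t) (hk : (k : ℝ) < t)
    (hj : t < j) (hl : t < l) (h : parabola s i j t = parabola s k l t) :
    s (i + j) = s (k + l) ∧ (t - i) * (j - t) = (t - k) * (l - t) :=
  eq_of_pageSign_mul_eq (mul_pos (by linarith) (by linarith))
    (mul_pos (by linarith) (by linarith)) h

lemma interleaved_of_parabola_eq {i j k l : ℕ} {t : ℝ} (hi : (i : ℝ) < t) (hk : (k : ℝ) < t)
    (hj : t < j) (hl : t < l) (hne : (i, j) ≠ (k, l))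
    (h : (t - i) * (j - t) = (t - k) * (l - t)) :
    (i < k ∧ k < j ∧ j < l) ∨ (k < i ∧ i < l ∧ l < j) := by
  have hkj : k < j := by exact_mod_cast hk.trans hj
  have hil : i < l := by exact_mod_cast hi.trans hl
  rcases lt_trichotomy i k with h1 | rfl | h1
  · rcases lt_or_ge j l with h2 | h2
    · exact Or.inl ⟨h1, hkj, h2⟩
    · have h3 : (i : ℝ) < k := by exact_mod_cast h1
      have h4 : (l : ℝ) ≤ j := by exact_mod_cast h2
      nlinarith
  · have h3 : (j : ℝ) - t = l - t := mul_left_cancel₀ (sub_pos.2 hi).ne' h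
    have h4 : j = l := by exact_mod_cast sub_left_injective h3
    exact absurd (by rw [h4]) hne
  · rcases lt_or_ge l j with h2 | h2
    · exact Or.inr ⟨h1, hil, h2⟩
    · have h3 : (k : ℝ) < i := by exact_mod_cast h1
      have h4 : (j : ℝ) ≤ l := by exact_mod_cast h2
      nlinarith

lemma eq_of_parabola_eq_of_parabola_eq {i j k l : ℕ} {t t' : ℝ} (hsum : i + j ≠ k + l)
    (h : (t - i) * (j - t) = (t - k) * (l - t))
    (h' : (t' - i) * (j - t') = (t' - k) * (l - t')) : t = t' := by
  have h1 : ((i : ℝ) + j - k - l) * (t - t') = 0 := by linarith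
  rcases mul_eq_zero.1 h1 with h2 | h2
  · exact absurd (by exact_mod_cast (show (i : ℝ) + j = k + l by linarith)) hsum
  · linarith

lemma add_ne_add_of_parabola_eq {i j k l : ℕ} {t : ℝ} (hi : (i : ℝ) < t) (hk : (k : ℝ) < t)
    (hj : t < j) (hl : t < l) (hne : (i, j) ≠ (k, l))
    (h : (t - i) * (j - t) = (t - k) * (l - t)) : i + j ≠ k + l := by
  intro hsum
  have hs : (i : ℝ) + j = k + l := by exact_mod_cast hsum
  have hfac : ((k : ℝ) - i) * (k - j) = 0 := by
    have h1 : (j : ℝ) = k + l - i := by linarith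
    rw [h1] at h ⊢
    linarith
  rcases interleaved_of_parabola_eq hi hk hj hl hne h with h2 | h2
  · have h3 : (i : ℝ) < k := by exact_mod_cast h2.1
    have h4 : (k : ℝ) < j := by exact_mod_cast h2.2.1
    nlinarith
  · have h3 : (k : ℝ) < i := by exact_mod_cast h2.1
    have h4 : (k : ℝ) < j := hk.trans hj
    nlinarith

lemma exists_parabola_eq {i j k l : ℕ} (hik : i < k) (hkj : k < j) (hjl : j < l)
    (hs : s (i + j) = s (k + l)) :
    ∃ t : ℝ, (k : ℝ) < t ∧ t < j ∧ parabola s i j t = parabola s k l t := by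
  have h1 : (i : ℝ) < k := by exact_mod_cast hik
  have h2 : (k : ℝ) < j := by exact_mod_cast hkj
  have h3 : (j : ℝ) < l := by exact_mod_cast hjl
  have hA : 0 < (k : ℝ) + l - i - j := by linarith
  refine ⟨(k * l - i * j) / (k + l - i - j), ?_, ?_, ?_⟩
  · rw [lt_div_iff₀ hA]
    nlinarith
  · rw [div_lt_iff₀ hA]
    nlinarith
  · unfold parabola
    rw [hs]
    congr 1
    field_simp
    ring

/-- The two-page drawing of `K n` in which the page of `{i, j}` depends only on `i + j`. -/
def twoPage (n : ℕ) : XMonotoneDrawing n where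
  x i := (i : ℕ)
  x_strictMono i j h := by simpa using h
  e i j := parabola s i j
  cont i j _ := by unfold parabola; fun_prop
  end_left i j _ := by simp [parabola]
  end_right i j _ := by simp [parabola]
  avoid_vertex i m j him hmj := by
    have h1 : ((i : ℕ) : ℝ) < (m : ℕ) := by simpa using him
    have h2 : ((m : ℕ) : ℝ) < (j : ℕ) := by simpa using hmj
    unfold parabola
    refine mul_ne_zero (fun h0 => ?_) (mul_pos (by linarith) (by linarith)).ne'
    have := pageSign_mul_self (s (i + j))
    rw [h0] at this
    simp at this
  cross_finite i j k l _ _ hne := by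
    have hne' : ((i : ℕ), (j : ℕ)) ≠ ((k : ℕ), (l : ℕ)) := by
      simpa [Prod.ext_iff, Fin.ext_iff] using hne
    refine Set.Subsingleton.finite fun t ht t' ht' => ?_
    obtain ⟨h1, h2, h3⟩ := ht
    obtain ⟨h1', h2', h3'⟩ := ht'
    rw [max_lt_iff] at h1 h1'
    rw [lt_min_iff] at h2 h2'
    have h4 := (eq_of_parabola_eq s h1.1 h1.2 h2.1 h2.2 h3).2
    have h4' := (eq_of_parabola_eq s h1'.1 h1'.2 h2'.1 h2'.2 h3').2
    exact eq_of_parabola_eq_of_parabola_eq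
      (add_ne_add_of_parabola_eq h1.1 h1.2 h2.1 h2.2 hne' h4) h4 h4'
  sign_change i j k l _ _ hne t h1 h2 h3 := by
    have hne' : ((i : ℕ), (j : ℕ)) ≠ ((k : ℕ), (l : ℕ)) := by
      simpa [Prod.ext_iff, Fin.ext_iff] using hne
    rw [max_lt_iff] at h1
    rw [lt_min_iff] at h2
    obtain ⟨h4, h5⟩ := eq_of_parabola_eq s h1.1 h1.2 h2.1 h2.2 h3
    have h6 := add_ne_add_of_parabola_eq h1.1 h1.2 h2.1 h2.2 hne' h5
    refine ⟨1, one_pos, fun p _ _ hp u _ hu _ => ?_⟩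
    have h7 : ((i : ℕ) : ℝ) + (j : ℕ) - (k : ℕ) - (l : ℕ) ≠ 0 := fun h0 =>
      h6 (by exact_mod_cast (show ((i : ℕ) : ℝ) + (j : ℕ) = (k : ℕ) + (l : ℕ) by linarith))
    have h8 : ∀ r, parabola s i j r - parabola s k l r =
        pageSign (s (k + l)) * ((((i : ℕ) : ℝ) + (j : ℕ) - (k : ℕ) - (l : ℕ)) * (r - t)) := by
      intro r
      unfold parabola
      rw [h4]
      linear_combination (pageSign (s (k + l)) : ℝ) * h5
    rw [h8, h8]
    have h9 : ∀ ε A : ℝ, ε * (A * (p - t)) * (ε * (A * (u - t))) =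
        (ε * ε) * ((A * A) * ((p - t) * (u - t))) := by intros; ring
    rw [h9, pageSign_mul_self, one_mul]
    exact mul_neg_of_pos_of_neg (mul_self_pos.2 h7)
      (mul_neg_of_neg_of_pos (by linarith) (by linarith))

lemma twoPage_crossCount {n : ℕ} {i j k l : Fin n} (hne : (i, j) ≠ (k, l)) :
    (twoPage s n).crossCount i j k l = if s (i + j) = s (k + l) ∧
      (((i : ℕ) < k ∧ (k : ℕ) < j ∧ (j : ℕ) < l) ∨ ((k : ℕ) < i ∧ (i : ℕ) < l ∧ (l : ℕ) < j))
      then 1 else 0 := by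
  have hne' : ((i : ℕ), (j : ℕ)) ≠ ((k : ℕ), (l : ℕ)) := by
    simpa [Prod.ext_iff, Fin.ext_iff] using hne
  have hmem : ∀ t, t ∈ (twoPage s n).crossSet i j k l →
      (s (i + j) = s (k + l) ∧ (t - (i : ℕ)) * ((j : ℕ) - t) = (t - (k : ℕ)) * ((l : ℕ) - t)) ∧
      (i + j : ℕ) ≠ k + l ∧
      (((i : ℕ) < k ∧ (k : ℕ) < j ∧ (j : ℕ) < l) ∨
        ((k : ℕ) < i ∧ (i : ℕ) < l ∧ (l : ℕ) < j)) := by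
    rintro t ⟨h1, h2, h3⟩
    rw [max_lt_iff] at h1
    rw [lt_min_iff] at h2
    have h4 := eq_of_parabola_eq s h1.1 h1.2 h2.1 h2.2 h3
    exact ⟨h4, add_ne_add_of_parabola_eq h1.1 h1.2 h2.1 h2.2 hne' h4.2,
      interleaved_of_parabola_eq h1.1 h1.2 h2.1 h2.2 hne' h4.2⟩
  unfold XMonotoneDrawing.crossCount
  split_ifs with hc
  · obtain ⟨t, ht⟩ : ((twoPage s n).crossSet i j k l).Nonempty := by
      obtain ⟨hs, ⟨h1, h2, h3⟩ | ⟨h1, h2, h3⟩⟩ := hc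
      · obtain ⟨t, ht1, ht2, ht3⟩ := exists_parabola_eq s h1 h2 h3 hs
        refine ⟨t, max_lt ?_ ht1, lt_min ht2 ?_, ht3⟩
        · exact lt_trans (by simpa [twoPage] using h1) ht1
        · exact lt_trans ht2 (by simpa [twoPage] using h3)
      · obtain ⟨t, ht1, ht2, ht3⟩ := exists_parabola_eq s h1 h2 h3 hs.symm
        refine ⟨t, max_lt ht1 ?_, lt_min ?_ ht2, ht3.symm⟩
        · exact lt_trans (by simpa [twoPage] using h1) ht1
        · exact lt_trans ht2 (by simpa [twoPage] using h3)
    refine Set.ncard_eq_one.2 ⟨t, Set.eq_singleton_iff_unique_mem.2 ⟨ht, fun t' ht' => ?_⟩⟩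
    exact eq_of_parabola_eq_of_parabola_eq (hmem t ht).2.1 (hmem t' ht').1.2 (hmem t ht).1.2
  · rw [Set.eq_empty_of_forall_notMem fun t ht => hc ⟨(hmem t ht).1.1, (hmem t ht).2.2⟩,
      Set.ncard_empty]

lemma admissible_add (n : ℕ) : Admissible (fun i _ j => s (i + j)) n :=
  fun _ _ _ _ _ _ _ _ => ⟨fun h => h.symm, fun _ => rfl⟩

theorem twoPage_cr (n : ℕ) :
    ((twoPage s n).cr : ℤ) = quadSum n (oddPairs fun i _ j => s (i + j)) := by
  set G : ℕ → ℕ → ℕ → ℕ → ℕ := fun i j k l => if s (i + j) = s (k + l) ∧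
      ((i < k ∧ k < j ∧ j < l) ∨ (k < i ∧ i < l ∧ l < j)) then 1 else 0 with hG
  have h1 : (∑ p : (Fin n × Fin n) × (Fin n × Fin n),
      if p.1.1 < p.1.2 ∧ p.2.1 < p.2.2 ∧ p.1 ≠ p.2 then
        (twoPage s n).crossCount p.1.1 p.1.2 p.2.1 p.2.2 else 0) =
      ∑ i ∈ range n, ∑ j ∈ range n, ∑ k ∈ range n, ∑ l ∈ range n,
        if i < j ∧ k < l ∧ i ≠ k ∧ i ≠ l ∧ j ≠ k ∧ j ≠ l then G i j k l else 0 := by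
    rw [← sum_fin_quadruples n fun i j k l =>
      if i < j ∧ k < l ∧ i ≠ k ∧ i ≠ l ∧ j ≠ k ∧ j ≠ l then G i j k l else 0]
    refine sum_congr rfl fun p _ => ?_
    obtain ⟨⟨i, j⟩, k, l⟩ := p
    simp only [Fin.lt_def]
    by_cases hne : (i, j) = (k, l)
    · obtain ⟨rfl, rfl⟩ := Prod.ext_iff.1 hne
      simp
    · rw [twoPage_crossCount s hne]
      simp only [hne, ne_eq, not_false_eq_true, and_true, hG]
      split_ifs <;> first | rfl | omega
  have h2 := sum_two_pairs n fun i j k l => (G i j k l : ℤ)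
  have h3 : quadSum n (fun a b c d => (G a b c d : ℤ) + G a c b d + G a d b c + G b c a d +
      G b d a c + G c d a b) = 2 * quadSum n (oddPairs fun i _ j => s (i + j)) := by
    rw [← quadSum_const_mul]
    refine quadSum_congr fun a b c d hab hbc hcd _ => ?_
    simp only [hG, oddPairs, ne_eq, not_true_eq_false, if_false, add_zero]
    have e1 : ¬ (s (a + b) = s (c + d) ∧ ((a < c ∧ c < b ∧ b < d) ∨ (c < a ∧ a < d ∧ d < b))) := by
      omega
    have e2 : ¬ (s (a + d) = s (b + c) ∧ ((a < b ∧ b < d ∧ d < c) ∨ (b < a ∧ a < c ∧ c < d))) := by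
      omega
    have e3 : ¬ (s (b + c) = s (a + d) ∧ ((b < a ∧ a < c ∧ c < d) ∨ (a < b ∧ b < d ∧ d < c))) := by
      omega
    have e4 : ¬ (s (c + d) = s (a + b) ∧ ((c < a ∧ a < d ∧ d < b) ∨ (a < c ∧ c < b ∧ b < d))) := by
      omega
    rw [if_neg e1, if_neg e2, if_neg e3, if_neg e4]
    by_cases hs : s (a + c) = s (b + d)
    · simp [hs, hab, hbc, hcd]
    · simp [hs, Ne.symm hs]
  rw [h3] at h2
  unfold XMonotoneDrawing.cr
  rw [h1]
  have h4 : ((∑ i ∈ range n, ∑ j ∈ range n, ∑ k ∈ range n, ∑ l ∈ range n,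
      if i < j ∧ k < l ∧ i ≠ k ∧ i ≠ l ∧ j ≠ k ∧ j ≠ l then G i j k l else 0 : ℕ) : ℤ) =
      2 * quadSum n (oddPairs fun i _ j => s (i + j)) := by
    rw [← h2]
    push_cast
    rfl
  omega

end TwoPage

section Prefix

/-- Partial sums of the signs of the pages. -/
def prefixSum (s : ℕ → Bool) (t : ℕ) : ℤ := ∑ c ∈ range t, pageSign (s c)

lemma prefixSum_add_of_forall (s : ℕ → Bool) (b : Bool) (p t : ℕ) (h : ∀ c < t, s (p + c) = b) :
    prefixSum s (p + t) = prefixSum s p + pageSign b * t := by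
  have h1 : ∑ c ∈ range t, pageSign (s (p + c)) = ∑ c ∈ range t, pageSign b :=
    sum_congr rfl fun c hc => by rw [h c (mem_range.1 hc)]
  rw [prefixSum, prefixSum, sum_range_add, h1, sum_const, card_range, nsmul_eq_mul, mul_comm]

lemma imbalance_eq_prefixSum (s : ℕ → Bool) {n i j : ℕ} (hij : i < j) (hj : j < n) :
    imbalance (fun i _ j => s (i + j)) n i j =
      prefixSum s (i + n) - prefixSum s j - pageSign (s (i + j)) * (j - i) := by
  obtain ⟨p, rfl⟩ := Nat.exists_eq_add_of_lt hij
  obtain ⟨q, rfl⟩ := Nat.exists_eq_add_of_lt hj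
  set j := i + p + 1 with hjdef
  have hlow : ∑ m ∈ range i, side (fun i _ j => s (i + j)) i j m =
      prefixSum s (j + i) - prefixSum s j := by
    rw [prefixSum, sum_range_add, prefixSum, add_sub_cancel_left]
    refine sum_congr rfl fun m hm => ?_
    rw [side_lt (mem_range.1 hm) hij, pageSign, add_comm m j]
  have hmid : ∑ m ∈ range p, side (fun i _ j => s (i + j)) i j (i + 1 + m) =
      -(pageSign (s (i + j)) * p) := by
    rw [sum_congr rfl fun m hm => by
      rw [side_mid (by omega) (by have := mem_range.1 hm; omega)]]
    rw [sum_const, card_range, nsmul_eq_mul, pageSign]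
    split_ifs <;> ring
  have hhigh : ∑ m ∈ range q, side (fun i _ j => s (i + j)) i j (j + 1 + m) =
      prefixSum s (i + j + 1 + q) - prefixSum s (i + j + 1) := by
    rw [prefixSum, sum_range_add, prefixSum, add_sub_cancel_left]
    refine sum_congr rfl fun m _ => ?_
    rw [side_gt (by omega) hij, pageSign]
    congr 3
    omega
  have hn : j + q + 1 = j + 1 + q := by omega
  have hj' : range j = range (i + 1 + p) := by congr 1; omega
  rw [imbalance, hn, sum_range_add, sum_range_succ, hj', sum_range_add, sum_range_succ,
    hlow, hmid, hhigh, side_self_left, side_self_right]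
  have h1 : prefixSum s (i + j + 1) = prefixSum s (j + i) + pageSign (s (i + j)) := by
    rw [prefixSum, sum_range_succ, prefixSum, add_comm j i]
  have h2 : i + (j + 1 + q) = i + j + 1 + q := by omega
  have h3 : (j : ℤ) - i = p + 1 := by rw [hjdef]; push_cast; ring
  · rw [h1, h2, h3]
    ring
  all_goals exact hij

end Prefix

section PairSum

lemma pairSum_split (p q : ℕ) (F : ℕ → ℕ → ℤ) :
    pairSum (p + q) F = pairSum p F + ∑ i ∈ range p, ∑ b ∈ range q, F i (p + b) +
      pairSum q (fun a b => F (p + a) (p + b)) := by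
  induction q with
  | zero => simp [pairSum]
  | succ q ih =>
    simp only [← add_assoc, pairSum_succ, ih, sum_range_add, sum_range_succ, sum_add_distrib]
    ring

lemma pairSum_succ_shift (m : ℕ) (F : ℕ → ℕ → ℤ) :
    pairSum (m + 1) F = pairSum m (fun a b => F a (b + 1)) + ∑ a ∈ range m, F a (a + 1) := by
  induction m with
  | zero => simp [pairSum]
  | succ m ih =>
    rw [pairSum_succ, ih, pairSum_succ, sum_range_succ, sum_range_succ]
    ring

lemma two_mul_sum_range_cast (m : ℕ) : 2 * ∑ b ∈ range m, (b : ℤ) = m * (m - 1) := by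
  induction m with
  | zero => simp
  | succ m ih => rw [sum_range_succ, mul_add, ih]; push_cast; ring

lemma six_mul_sum_range_sq (m : ℕ) :
    6 * ∑ b ∈ range m, (b : ℤ) ^ 2 = m * (m - 1) * (2 * m - 1) := by
  induction m with
  | zero => simp
  | succ m ih => rw [sum_range_succ, mul_add, ih]; push_cast; ring

lemma sum_range_sub_affine_sq (m : ℕ) (r t : ℤ) :
    6 * ∑ b ∈ range m, (r * (m - b) + t) ^ 2 =
      r ^ 2 * (m * (m + 1) * (2 * m + 1)) + 6 * r * t * (m * (m + 1)) + 6 * t ^ 2 * m := by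
  have h1 := two_mul_sum_range_cast m
  have h2 := six_mul_sum_range_sq m
  have h3 : ∑ b ∈ range m, (r * (m - b) + t) ^ 2 =
      r ^ 2 * ∑ b ∈ range m, (b : ℤ) ^ 2 - 2 * r * (r * m + t) * ∑ b ∈ range m, (b : ℤ) +
        (r * m + t) ^ 2 * m := by
    have h4 : ∀ b : ℕ, (r * (m - b) + t) ^ 2 =
        r ^ 2 * (b : ℤ) ^ 2 - 2 * r * (r * m + t) * b + (r * m + t) ^ 2 := fun b => by ring
    simp only [h4, sum_add_distrib, sum_sub_distrib, ← mul_sum, sum_const, card_range,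
      nsmul_eq_mul]
    ring
  rw [h3]
  linear_combination r ^ 2 * h2 - 6 * r * (r * m + t) * h1

lemma twelve_mul_pairSum_sub_sq (m : ℕ) :
    12 * pairSum m (fun a b => ((b : ℤ) - a) ^ 2) = m ^ 2 * (m ^ 2 - 1) := by
  induction m with
  | zero => simp [pairSum]
  | succ m ih =>
    rw [pairSum_succ, mul_add, ih]
    have h := sum_range_sub_affine_sq m 1 0
    simp only [one_mul, add_zero] at h
    push_cast
    linear_combination 2 * h

lemma six_mul_pairSum_odd_sq (m : ℕ) :
    6 * pairSum m (fun a b => (2 * ((b : ℤ) - a) + 1) ^ 2 + 1) =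
      m * (m + 1) * (2 * m * (m + 1) - 1) + 3 * m * (m - 3) := by
  induction m with
  | zero => simp [pairSum]
  | succ m ih =>
    rw [pairSum_succ, mul_add, ih, sum_add_distrib]
    have h := sum_range_sub_affine_sq m 2 1
    simp only [sum_const, card_range, nsmul_eq_mul]
    push_cast
    linear_combination h

lemma six_mul_sum_staircase_even (m : ℕ) :
    6 * ∑ k ∈ range m, ∑ b ∈ range m, (if b ≤ k then (b : ℤ) ^ 2 else ((k : ℤ) + 1) ^ 2) =
      m ^ 2 * (m ^ 2 - 1) := by
  induction m with
  | zero => simp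
  | succ m ih =>
    simp only [sum_range_succ, sum_add_distrib, mul_add, ih, le_refl, if_true]
    have h1 : ∑ b ∈ range m, (if b ≤ m then (b : ℤ) ^ 2 else ((m : ℤ) + 1) ^ 2) =
        ∑ b ∈ range m, (b : ℤ) ^ 2 := sum_congr rfl fun b hb => if_pos (mem_range.1 hb).le
    have h2 : ∑ k ∈ range m, (if m ≤ k then (m : ℤ) ^ 2 else ((k : ℤ) + 1) ^ 2) =
        ∑ k ∈ range m, (k : ℤ) ^ 2 + m ^ 2 := by
      rw [sum_congr rfl fun k hk => if_neg (mem_range.1 hk).not_ge]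
      have := sum_range_succ' (fun k => (k : ℤ) ^ 2) m
      rw [sum_range_succ] at this
      push_cast at this
      linarith
    rw [h1, h2]
    have h3 := six_mul_sum_range_sq m
    push_cast
    linear_combination 2 * h3

lemma three_mul_sum_odd_sq (m : ℕ) :
    3 * ∑ b ∈ range m, (2 * (b : ℤ) + 1) ^ 2 = (m : ℤ) * (4 * m ^ 2 - 1) := by
  induction m with
  | zero => simp
  | succ m ih => rw [sum_range_succ, mul_add, ih]; push_cast; ring

lemma three_mul_sum_staircase_odd (m : ℕ) :
    3 * ∑ k ∈ range (m + 1), ∑ b ∈ range m,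
      (if b < k then (2 * (b : ℤ) + 1) ^ 2 else (2 * (k : ℤ) + 1) ^ 2) =
      (m : ℤ) * (m + 1) * (2 * m * (m + 1) - 1) := by
  induction m with
  | zero => simp
  | succ m ih =>
    rw [sum_range_succ]
    simp only [sum_range_succ _ m, sum_add_distrib] at ih ⊢
    have h1 : ∑ b ∈ range m, (if b < m + 1 then (2 * (b : ℤ) + 1) ^ 2
        else (2 * ((m + 1 : ℕ) : ℤ) + 1) ^ 2) = ∑ b ∈ range m, (2 * (b : ℤ) + 1) ^ 2 :=
      sum_congr rfl fun b hb => if_pos (by have := mem_range.1 hb; omega)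
    have h2 : ∑ k ∈ range m, (if m < k then (2 * (m : ℤ) + 1) ^ 2 else (2 * (k : ℤ) + 1) ^ 2) =
        ∑ k ∈ range m, (2 * (k : ℤ) + 1) ^ 2 :=
      sum_congr rfl fun k hk => if_neg (mem_range.1 hk).not_gt
    rw [h1, h2]
    have h3 := three_mul_sum_odd_sq m
    simp only [lt_irrefl, if_false, Nat.lt_succ_self, if_true]
    push_cast
    linear_combination ih + 2 * h3

end PairSum

section EvenDrawing

/-- The pages of an optimal two-page drawing with `2 * m` vertices. -/
def evenPages (m c : ℕ) : Bool := decide (c < m ∨ (2 * m ≤ c ∧ c < 3 * m))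

lemma prefixSum_evenPages {m i : ℕ} (hi : i ≤ m) :
    prefixSum (evenPages m) i = i ∧ prefixSum (evenPages m) (m + i) = m - i ∧
      prefixSum (evenPages m) (i + (m + m)) = i ∧
      prefixSum (evenPages m) (m + i + (m + m)) = m - i := by
  have h1 : ∀ k ≤ m, prefixSum (evenPages m) k = k := fun k hk => by
    have h := prefixSum_add_of_forall (evenPages m) true 0 k fun c hc => by
      simp only [evenPages, decide_eq_true_eq]; omega
    simpa [prefixSum, pageSign] using h
  have h2 : ∀ k ≤ m, prefixSum (evenPages m) (m + k) = m - k := fun k hk => by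
    have h := prefixSum_add_of_forall (evenPages m) false m k fun c hc => by
      simp only [evenPages, decide_eq_false_iff_not]; omega
    rw [h, h1 m le_rfl, pageSign]
    simp [sub_eq_add_neg]
  have h3 : ∀ k ≤ m, prefixSum (evenPages m) (m + m + k) = k := fun k hk => by
    have h := prefixSum_add_of_forall (evenPages m) true (m + m) k fun c hc => by
      simp only [evenPages, decide_eq_true_eq]; omega
    rw [h, h2 m le_rfl, pageSign]
    simp
  have h4 : prefixSum (evenPages m) (m + m + m + i) = m - i := by
    have h := prefixSum_add_of_forall (evenPages m) false (m + m + m) i fun c hc => by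
      simp only [evenPages, decide_eq_false_iff_not]; omega
    rw [h, h3 m le_rfl, pageSign]
    simp [sub_eq_add_neg]
  refine ⟨h1 i hi, h2 i hi, ?_, ?_⟩
  · rw [add_comm i, h3 i hi]
  · rw [show m + i + (m + m) = m + m + m + i by omega, h4]

lemma pageSign_evenPages (m c : ℕ) :
    pageSign (evenPages m c) = if c < m ∨ (2 * m ≤ c ∧ c < 3 * m) then 1 else -1 := by
  simp [pageSign, evenPages]

lemma pairSum_imbalance_evenPages (m : ℕ) :
    pairSum (m + m) (fun i j => imbalance (fun i _ j => evenPages m (i + j)) (m + m) i j ^ 2) =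
      (m : ℤ) ^ 2 * (m ^ 2 - 1) := by
  have hlow : pairSum m
      (fun i j => imbalance (fun i _ j => evenPages m (i + j)) (m + m) i j ^ 2) =
      pairSum m fun i j => if i + j < m then 4 * ((j : ℤ) - i) ^ 2 else 0 := by
    refine pairSum_congr fun i j hij hj => ?_
    rw [imbalance_eq_prefixSum _ hij (by omega), (prefixSum_evenPages (by omega)).2.2.1,
      (prefixSum_evenPages hj.le).1, pageSign_evenPages]
    split_ifs
    all_goals first | omega | ring
  have hhigh : pairSum m
      (fun a b => imbalance (fun i _ j => evenPages m (i + j)) (m + m) (m + a) (m + b) ^ 2) =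
      pairSum m fun a b => if a + b < m then 0 else 4 * ((b : ℤ) - a) ^ 2 := by
    refine pairSum_congr fun a b hab hb => ?_
    rw [imbalance_eq_prefixSum _ (by omega) (by omega), (prefixSum_evenPages (by omega)).2.2.2,
      (prefixSum_evenPages hb.le).2.1, pageSign_evenPages]
    push_cast
    split_ifs
    all_goals first | omega | ring
  have hmix : ∑ i ∈ range m, ∑ b ∈ range m,
      imbalance (fun i _ j => evenPages m (i + j)) (m + m) i (m + b) ^ 2 =
      4 * ∑ k ∈ range m, ∑ b ∈ range m,
        (if b ≤ k then (b : ℤ) ^ 2 else ((k : ℤ) + 1) ^ 2) := by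
    rw [← sum_range_reflect, mul_sum]
    refine sum_congr rfl fun k hk => ?_
    rw [mul_sum]
    refine sum_congr rfl fun b hb => ?_
    rw [mem_range] at hk hb
    have hcast : ((m - 1 - k : ℕ) : ℤ) = m - 1 - k := by omega
    rw [imbalance_eq_prefixSum _ (by omega) (by omega), (prefixSum_evenPages (by omega)).2.2.1,
      (prefixSum_evenPages hb.le).2.1, pageSign_evenPages]
    push_cast [hcast]
    split_ifs
    all_goals first | omega | ring
  rw [pairSum_split, hlow, hhigh, hmix, add_right_comm, ← pairSum_add]
  have hsq : pairSum m (fun i j => (if i + j < m then 4 * ((j : ℤ) - i) ^ 2 else 0) +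
      if i + j < m then 0 else 4 * ((j : ℤ) - i) ^ 2) =
      4 * pairSum m fun i j => ((j : ℤ) - i) ^ 2 := by
    rw [← pairSum_const_mul]
    refine pairSum_congr fun i j _ _ => ?_
    split_ifs <;> ring
  rw [hsq]
  linarith [twelve_mul_pairSum_sub_sq m, six_mul_sum_staircase_even m]

end EvenDrawing

section OddDrawing

/-- The pages of an optimal two-page drawing with `2 * m + 1` vertices. -/
def oddPages (m c : ℕ) : Bool := decide (c ≤ m ∨ (2 * m + 1 ≤ c ∧ c ≤ 3 * m + 1))

lemma prefixSum_oddPages_low {m i : ℕ} (hi : i ≤ m + 1) :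
    prefixSum (oddPages m) i = i ∧ prefixSum (oddPages m) (i + (m + 1 + m)) = i + 1 := by
  have h1 : ∀ k ≤ m + 1, prefixSum (oddPages m) k = k := fun k hk => by
    have h := prefixSum_add_of_forall (oddPages m) true 0 k fun c hc => by
      simp only [oddPages, decide_eq_true_eq]; omega
    simpa [prefixSum, pageSign] using h
  have h2 : prefixSum (oddPages m) (m + 1 + m) = 1 := by
    have h := prefixSum_add_of_forall (oddPages m) false (m + 1) m fun c hc => by
      simp only [oddPages, decide_eq_false_iff_not]; omega
    rw [h, h1 _ le_rfl, pageSign]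
    simp
  refine ⟨h1 i hi, ?_⟩
  have h := prefixSum_add_of_forall (oddPages m) true (m + 1 + m) i fun c hc => by
    simp only [oddPages, decide_eq_true_eq]; omega
  rw [add_comm i, h, h2, pageSign]
  simp [add_comm]

lemma prefixSum_oddPages_high {m b : ℕ} (hb : b ≤ m) :
    prefixSum (oddPages m) (m + 1 + b) = m + 1 - b ∧
      prefixSum (oddPages m) (m + 1 + b + (m + 1 + m)) = m + 2 - b := by
  constructor
  · have h := prefixSum_add_of_forall (oddPages m) false (m + 1) b fun c hc => by
      simp only [oddPages, decide_eq_false_iff_not]; omega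
    rw [h, (prefixSum_oddPages_low le_rfl).1, pageSign]
    simp [sub_eq_add_neg]
  · have h := prefixSum_add_of_forall (oddPages m) false (m + 1 + (m + 1 + m)) b fun c hc => by
      simp only [oddPages, decide_eq_false_iff_not]; omega
    rw [add_right_comm, h, (prefixSum_oddPages_low le_rfl).2, pageSign]
    norm_num
    ring

lemma pageSign_oddPages (m c : ℕ) :
    pageSign (oddPages m c) = if c ≤ m ∨ (2 * m + 1 ≤ c ∧ c ≤ 3 * m + 1) then 1 else -1 := by
  simp [pageSign, oddPages]

lemma two_mul_pairSum_imbalance_oddPages (m : ℕ) :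
    2 * pairSum (m + 1 + m)
        (fun i j => imbalance (fun i _ j => oddPages m (i + j)) (m + 1 + m) i j ^ 2) =
      (m : ℤ) * (m + 1) * (2 * m * (m + 1) - 1) + m * (m - 1) := by
  have hlow : pairSum (m + 1)
      (fun i j => imbalance (fun i _ j => oddPages m (i + j)) (m + 1 + m) i j ^ 2) =
      pairSum (m + 1) fun i j => if i + j ≤ m then (2 * ((j : ℤ) - i) - 1) ^ 2 else 1 := by
    refine pairSum_congr fun i j hij hj => ?_
    rw [imbalance_eq_prefixSum _ hij (by omega), (prefixSum_oddPages_low (by omega)).2,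
      (prefixSum_oddPages_low hj.le).1, pageSign_oddPages]
    split_ifs
    all_goals first | omega | ring
  have hshift : pairSum (m + 1)
      (fun i j => if i + j ≤ m then (2 * ((j : ℤ) - i) - 1) ^ 2 else 1) =
      pairSum m (fun a b => if a + b < m then (2 * ((b : ℤ) - a) + 1) ^ 2 else 1) + m := by
    rw [pairSum_succ_shift]
    congr 1
    · refine pairSum_congr fun a b _ _ => ?_
      push_cast
      split_ifs
      all_goals first | omega | ring
    · rw [sum_congr rfl fun a _ => show _ = (1 : ℤ) by push_cast; split_ifs <;> ring]
      simp
  have hhigh : pairSum m (fun a b =>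
        imbalance (fun i _ j => oddPages m (i + j)) (m + 1 + m) (m + 1 + a) (m + 1 + b) ^ 2) =
      pairSum m fun a b => if a + b < m then 1 else (2 * ((b : ℤ) - a) + 1) ^ 2 := by
    refine pairSum_congr fun a b hab hb => ?_
    rw [imbalance_eq_prefixSum _ (by omega) (by omega), (prefixSum_oddPages_high (by omega)).2,
      (prefixSum_oddPages_high hb.le).1, pageSign_oddPages]
    push_cast
    split_ifs
    all_goals first | omega | ring
  have hmix : ∑ i ∈ range (m + 1), ∑ b ∈ range m,
      imbalance (fun i _ j => oddPages m (i + j)) (m + 1 + m) i (m + 1 + b) ^ 2 =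
      ∑ k ∈ range (m + 1), ∑ b ∈ range m,
        (if b < k then (2 * (b : ℤ) + 1) ^ 2 else (2 * (k : ℤ) + 1) ^ 2) := by
    rw [← sum_range_reflect]
    refine sum_congr rfl fun k hk => sum_congr rfl fun b hb => ?_
    rw [mem_range] at hk hb
    have hcast : ((m + 1 - 1 - k : ℕ) : ℤ) = m - k := by omega
    rw [imbalance_eq_prefixSum _ (by omega) (by omega), (prefixSum_oddPages_low (by omega)).2,
      (prefixSum_oddPages_high hb.le).1, pageSign_oddPages, hcast]
    push_cast
    split_ifs
    all_goals first | omega | ring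
  have hsq : pairSum m (fun a b => (if a + b < m then (2 * ((b : ℤ) - a) + 1) ^ 2 else 1) +
      if a + b < m then 1 else (2 * ((b : ℤ) - a) + 1) ^ 2) =
      pairSum m fun a b => (2 * ((b : ℤ) - a) + 1) ^ 2 + 1 := by
    refine pairSum_congr fun a b _ _ => ?_
    split_ifs <;> ring
  rw [pairSum_add] at hsq
  rw [pairSum_split, hlow, hhigh, hmix, hshift]
  linarith [six_mul_pairSum_odd_sq m, three_mul_sum_staircase_odd m]

end OddDrawing

/-- Crossings of a two-page drawing in terms of the imbalances of its edges. -/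
lemma eight_mul_twoPage_cr (s : ℕ → Bool) (n : ℕ) :
    8 * ((twoPage s n).cr : ℤ) =
      2 * pairSum n (fun i j => imbalance (fun i _ j => s (i + j)) n i j ^ 2) -
        n * (n - 1) * (n - 2) := by
  have h1 := four_mul_quadSum_oddPairs (admissible_add s n)
  have h2 := two_mul_pairSum_const n (-(n - 2))
  simp only [sub_eq_add_neg _ ((n : ℤ) - 2), pairSum_add] at h1
  rw [twoPage_cr]
  linear_combination 2 * h1 + h2

lemma exists_cr_eq_Zval {n : ℕ} (hn : 1 ≤ n) : ∃ D : XMonotoneDrawing n, D.cr = Zval n := by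
  obtain ⟨m, rfl | rfl⟩ : ∃ m, n = m + 1 + (m + 1) ∨ n = m + 1 + m :=
    ⟨(n - 1) / 2, by omega⟩
  · refine ⟨twoPage (evenPages (m + 1)) _, ?_⟩
    have h1 := eight_mul_twoPage_cr (evenPages (m + 1)) (m + 1 + (m + 1))
    rw [pairSum_imbalance_evenPages] at h1
    have h2 := four_mul_Zval_even m
    rw [show 2 * m + 2 = m + 1 + (m + 1) by omega] at h2
    push_cast at h1
    have h3 : 8 * ((twoPage (evenPages (m + 1)) (m + 1 + (m + 1))).cr : ℤ) =
        8 * (Zval (m + 1 + (m + 1)) : ℤ) := by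
      rw [h1]; linear_combination -2 * h2
    omega
  · refine ⟨twoPage (oddPages m) _, ?_⟩
    have h1 := eight_mul_twoPage_cr (oddPages m) (m + 1 + m)
    rw [two_mul_pairSum_imbalance_oddPages] at h1
    have h2 : 4 * (Zval (m + 1 + m) : ℤ) = m ^ 2 * (m - 1) ^ 2 := by
      rcases m with _ | m
      · simp [Zval]
      · rw [show m + 1 + 1 + (m + 1) = 2 * m + 3 by omega, four_mul_Zval_odd]
        push_cast
        ring
    push_cast at h1
    have h3 : 8 * ((twoPage (oddPages m) (m + 1 + m)).cr : ℤ) = 8 * (Zval (m + 1 + m) : ℤ) := by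
      rw [h1]; linear_combination -2 * h2
    omega

end MonotoneKn

/-- Every simple x-monotone drawing of `K n` has at least `Z(n)`
crossings; hence (together with the matching upper bound) the monotone crossing number
of `K n` — the least number of crossings over all x-monotone drawings — equals `Z(n)`. -/
theorem simple_monotone_cr_ge_Z_and_monotone_crossing_number (n : ℕ) (hn : 1 ≤ n) :
    (∀ D : XMonotoneDrawing n, D.Simple → Zval n ≤ D.cr) ∧
      IsLeast {m : ℕ | ∃ D : XMonotoneDrawing n, D.cr = m} (Zval n) := by
  have : NeZero n := ⟨by omega⟩
  exact ⟨fun D _ => MonotoneKn.Zval_le_cr D, MonotoneKn.exists_cr_eq_Zval hn,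
    fun _ ⟨D, hD⟩ => hD ▸ MonotoneKn.Zval_le_cr D⟩
end

section
/- For every semisimple x-monotone drawing D of K_n, the number ocr(D) of pairs of edges crossing an odd number of times satisfies ocr(D) = 2·Σ_{k=0}^{⌊n/2⌋−2} E_{≤≤k}(D) − (1/2)·C(n,2)·⌊(n−2)/2⌋ − (1/2)(1+(−1)^n)·E_{≤≤⌊n/2⌋−2}(D). -/
section SignChanges

variable {f : ℝ → ℝ} {a b : ℝ}

theorem mul_pos_of_continuousOn_of_ne_zero (hab : a ≤ b) (hf : ContinuousOn f (Set.Icc a b))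
    (h0 : ∀ t ∈ Set.Icc a b, f t ≠ 0) : 0 < f a * f b := by
  have ha := h0 a ⟨le_rfl, hab⟩
  have hb := h0 b ⟨hab, le_rfl⟩
  by_contra hneg
  have hlt : f a * f b < 0 := lt_of_le_of_ne (not_lt.mp hneg) (mul_ne_zero ha hb)
  rcases mul_neg_iff.mp hlt with ⟨h1, h2⟩ | ⟨h1, h2⟩
  · obtain ⟨t, ht, h⟩ := intermediate_value_Icc' hab hf ⟨h2.le, h1.le⟩
    exact h0 t ht h
  · obtain ⟨t, ht, h⟩ := intermediate_value_Icc hab hf ⟨h1.le, h2.le⟩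
    exact h0 t ht h

/-- If a continuous function on `[a, b]` changes sign at each of its finitely many zeros, then
the parity of the number of zeros is determined by the signs at the endpoints. -/
theorem odd_ncard_zeros_iff (hab : a < b) (hf : ContinuousOn f (Set.Icc a b))
    (ha : f a ≠ 0) (hb : f b ≠ 0) (hfin : {t | a < t ∧ t < b ∧ f t = 0}.Finite)
    (hsign : ∀ t, a < t → t < b → f t = 0 → ∃ ε > 0, ∀ s, a < s → t - ε < s → s < t →
      ∀ u, u < b → t < u → u < t + ε → f s * f u < 0) :
    Odd {t | a < t ∧ t < b ∧ f t = 0}.ncard ↔ f a * f b < 0 := by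
  obtain ⟨N, hN⟩ : ∃ N, {t | a < t ∧ t < b ∧ f t = 0}.ncard = N := ⟨_, rfl⟩
  induction N generalizing a with
  | zero =>
    have hempty := (Set.ncard_eq_zero hfin).mp hN
    have hpos : 0 < f a * f b := by
      refine mul_pos_of_continuousOn_of_ne_zero hab.le hf fun t ht h => ?_
      rcases ht.1.eq_or_lt with rfl | h1
      · exact ha h
      rcases ht.2.eq_or_lt with rfl | h2
      · exact hb h
      exact hempty.subset (show t ∈ {t | a < t ∧ t < b ∧ f t = 0} from ⟨h1, h2, h⟩)
    rw [hN]
    simp [hpos.le]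
  | succ N ih =>
    set Z := {t | a < t ∧ t < b ∧ f t = 0} with hZ
    have hne : Z.Nonempty := by
      rw [← Set.ncard_pos hfin]
      omega
    obtain ⟨t, htZ, hmin⟩ := Set.exists_min_image Z id hfin hne
    simp only [id] at hmin
    obtain ⟨hat, htb, hft⟩ := htZ
    obtain ⟨ε, hε, hsgn⟩ := hsign t hat htb hft
    obtain ⟨s, hs1, hst⟩ := exists_between (max_lt hat (sub_lt_self t hε))
    obtain ⟨has, hεs⟩ := max_lt_iff.mp hs1
    have hu : ∀ᶠ u in nhdsWithin t (Set.Ioi t), t < u ∧ u < b ∧ u < t + ε ∧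
        ∀ z ∈ Z \ {t}, u < z := by
      refine (eventually_mem_nhdsWithin).and (((eventually_lt_nhds htb).filter_mono
        nhdsWithin_le_nhds).and (((eventually_lt_nhds (by linarith)).filter_mono
        nhdsWithin_le_nhds).and ?_))
      refine (Set.Finite.eventually_all (hfin.subset Set.sdiff_subset)).mpr fun z hz => ?_
      exact (eventually_lt_nhds (lt_of_le_of_ne (hmin z hz.1) (Ne.symm hz.2))).filter_mono
        nhdsWithin_le_nhds
    obtain ⟨u, htu, hub, huε, huZ⟩ := hu.exists
    have hsu := hsgn s has hεs hst u hub htu huε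
    have hfu : f u ≠ 0 := by
      intro h
      simp [h] at hsu
    have hZu : {z | u < z ∧ z < b ∧ f z = 0} = Z \ {t} := by
      ext z
      simp only [hZ, Set.mem_ofPred_eq, Set.mem_sdiff, Set.mem_singleton_iff]
      constructor
      · rintro ⟨h1, h2, h3⟩
        exact ⟨⟨by linarith, h2, h3⟩, (htu.trans h1).ne'⟩
      · rintro ⟨⟨h1, h2, h3⟩, h4⟩
        exact ⟨huZ z ⟨⟨h1, h2, h3⟩, h4⟩, h2, h3⟩
    have hcard : (Z \ {t}).ncard = N := by
      have := Set.ncard_sdiff_singleton_add_one (a := t) (s := Z) ⟨hat, htb, hft⟩ hfin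
      omega
    have key := ih hub (hf.mono (Set.Icc_subset_Icc_left (by linarith))) hfu
      (by rw [hZu]; exact hfin.subset Set.sdiff_subset)
      (fun z h1 h2 h3 => by
        obtain ⟨δ, hδ, h⟩ := hsign z (by linarith) h2 h3
        exact ⟨δ, hδ, fun s' h4 => h s' (by linarith)⟩)
      (by rw [hZu, hcard])
    rw [hZu, hcard] at key
    have has_pos : 0 < f a * f s := by
      refine mul_pos_of_continuousOn_of_ne_zero has.le
        (hf.mono (Set.Icc_subset_Icc_right (by linarith))) fun z hz h => ?_
      rcases hz.1.eq_or_lt with rfl | h1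
      · exact ha h
      exact absurd (hmin z ⟨h1, by linarith [hz.2], h⟩) (by linarith [hz.2])
    rw [hN, Nat.odd_add_one, key]
    have hau : f a * f u < 0 := by
      rcases mul_pos_iff.mp has_pos with ⟨h1, h2⟩ | ⟨h1, h2⟩
      · exact mul_neg_of_pos_of_neg h1 (neg_of_mul_neg_right hsu h2.le)
      · exact mul_neg_of_neg_of_pos h1 (pos_of_mul_neg_right hsu h2.le)
    rcases lt_or_gt_of_ne hb with h | h <;> rcases mul_neg_iff.mp hau with ⟨h1, h2⟩ | ⟨h1, h2⟩ <;>
      simp [mul_neg_iff, h, h1, h2, not_lt_of_gt]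

end SignChanges

section Sums

variable {n : ℕ} {M : Type*} [AddCommMonoid M]

/-- The pairs `i < j` and `k < l` are four distinct indices. -/
def DisjointPairs (i j k l : Fin n) : Prop :=
  i < j ∧ k < l ∧ i ≠ k ∧ i ≠ l ∧ j ≠ k ∧ j ≠ l

instance (i j k l : Fin n) : Decidable (DisjointPairs i j k l) := by
  unfold DisjointPairs
  infer_instance

theorem ite_disjointPairs (i j k l : Fin n) (v : M) :
    (if DisjointPairs i j k l then v else 0) =
      (if i < j ∧ j < k ∧ k < l then v else 0) + (if i < k ∧ k < j ∧ j < l then v else 0) +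
      (if i < k ∧ k < l ∧ l < j then v else 0) + (if k < i ∧ i < j ∧ j < l then v else 0) +
      (if k < i ∧ i < l ∧ l < j then v else 0) + (if k < l ∧ l < i ∧ i < j then v else 0) := by
  by_cases h : DisjointPairs i j k l
  · rw [if_pos h]
    unfold DisjointPairs at h
    split_ifs <;> first | omega | simp
  · rw [if_neg h]
    unfold DisjointPairs at h
    split_ifs <;> first | omega | simp

theorem sum_disjointPairs (f : Fin n → Fin n → Fin n → Fin n → M) :
    ∑ i, ∑ j, ∑ k, ∑ l, (if DisjointPairs i j k l then f i j k l else 0) =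
      ∑ a, ∑ b, ∑ c, ∑ d, if a < b ∧ b < c ∧ c < d then
        f a b c d + f a c b d + f a d b c + f b c a d + f b d a c + f c d a b else 0 := by
  have hswap : ∀ g : Fin n → Fin n → Fin n → Fin n → M,
      ∑ a, ∑ b, ∑ c, ∑ d, g a b c d = ∑ a, ∑ c, ∑ b, ∑ d, g a b c d :=
    fun g => Finset.sum_congr rfl fun _ _ => Finset.sum_comm
  have hswapL : ∀ g : Fin n → Fin n → Fin n → Fin n → M,
      ∑ a, ∑ b, ∑ c, ∑ d, g a b c d = ∑ b, ∑ a, ∑ c, ∑ d, g a b c d :=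
    fun g => Finset.sum_comm
  have hswapR : ∀ g : Fin n → Fin n → Fin n → Fin n → M,
      ∑ a, ∑ b, ∑ c, ∑ d, g a b c d = ∑ a, ∑ b, ∑ d, ∑ c, g a b c d :=
    fun g => Finset.sum_congr rfl fun _ _ => Finset.sum_congr rfl fun _ _ => Finset.sum_comm
  have hsplit : ∀ (p : Prop) [Decidable p] (u v : M),
      (if p then u + v else 0) = (if p then u else 0) + (if p then v else 0) := by
    intro p _ u v
    split_ifs <;> simp
  simp only [ite_disjointPairs, hsplit, Finset.sum_add_distrib]
  congr 1
  congr 1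
  congr 1
  congr 1
  congr 1
  · rw [hswap]
  · rw [hswap, hswapR]
  · rw [hswap, hswapL]
  · rw [hswap, hswapL, hswapR]
  · rw [hswap, hswapL, hswapR, hswap]

theorem two_mul_sum_lt (g : Fin n → Fin n → ℚ) (hg : ∀ k l, g k l = g l k) :
    2 * ∑ k, ∑ l, (if k < l then g k l else 0) = ∑ k, ∑ l, if k ≠ l then g k l else 0 := by
  have h : ∑ k, ∑ l, (if k < l then g k l else 0) = ∑ k, ∑ l, if l < k then g k l else 0 := by
    rw [Finset.sum_comm]
    exact Finset.sum_congr rfl fun k _ => Finset.sum_congr rfl fun l _ => by rw [hg]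
  rw [two_mul]
  nth_rewrite 2 [h]
  simp only [← Finset.sum_add_distrib]
  refine Finset.sum_congr rfl fun k _ => Finset.sum_congr rfl fun l _ => ?_
  split_ifs <;> first | omega | simp

end Sums

namespace XMonotoneDrawing

variable {n : ℕ} (D : XMonotoneDrawing n)

theorem crossCount_comm (i j k l : Fin n) : D.crossCount i j k l = D.crossCount k l i j := by
  unfold crossCount crossSet
  simp only [max_comm (D.x i), min_comm (D.x j), eq_comm (a := D.e i j _)]

/-- Two edges whose domains intersect in `[x b, x c]` cross an odd number of times iff their
vertical order at `x b` differs from that at `x c`. -/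
theorem odd_crossCount_iff {i j k l b c : Fin n} (hij : i < j) (hkl : k < l)
    (hne : (i, j) ≠ (k, l)) (hbc : b < c) (hmax : max (D.x i) (D.x k) = D.x b)
    (hmin : min (D.x j) (D.x l) = D.x c) (hb : D.e i j (D.x b) - D.e k l (D.x b) ≠ 0)
    (hc : D.e i j (D.x c) - D.e k l (D.x c) ≠ 0) :
    Odd (D.crossCount i j k l) ↔
      (D.e i j (D.x b) - D.e k l (D.x b)) * (D.e i j (D.x c) - D.e k l (D.x c)) < 0 := by
  have hfin := D.cross_finite i j k l hij hkl hne
  have hsgn := D.sign_change i j k l hij hkl hne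
  have h1 := max_le_iff.mp hmax.le
  have h2 := le_min_iff.mp hmin.ge
  unfold crossCount crossSet
  rw [hmax, hmin] at hfin hsgn ⊢
  simp only [← sub_eq_zero (a := D.e i j _)] at hfin hsgn ⊢
  exact odd_ncard_zeros_iff (f := fun t => D.e i j t - D.e k l t) (D.x_strictMono hbc)
    (((D.cont i j hij).mono (Set.Icc_subset_Icc h1.1 h2.1)).sub
      ((D.cont k l hkl).mono (Set.Icc_subset_Icc h1.2 h2.2))) hb hc hfin hsgn

section Quadruple

variable {D} {a b c d : Fin n}

theorem not_odd_crossCount_of_lt (hbc : b < c) : ¬ Odd (D.crossCount a b c d) := by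
  have h : D.crossSet a b c d = ∅ := by
    ext t
    have := D.x_strictMono hbc
    simp only [crossSet, max_lt_iff, lt_min_iff, Set.mem_ofPred_eq, Set.mem_empty_iff_false,
      iff_false]
    rintro ⟨⟨_, h1⟩, ⟨h2, _⟩, _⟩
    linarith
  simp [crossCount, h]

theorem odd_crossCount_interlaced (hab : a < b) (hbc : b < c) (hcd : c < d) :
    Odd (D.crossCount a c b d) ↔ D.sig a b c = D.sig b c d := by
  have h1 := D.avoid_vertex a b c hab hbc
  have h2 := D.avoid_vertex b c d hbc hcd
  have hx1 := D.x_strictMono hab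
  have hx2 := D.x_strictMono hcd
  rw [D.odd_crossCount_iff (b := b) (c := c) (hab.trans hbc) (hbc.trans hcd)
    (by simp [hab.ne]) hbc (max_eq_right hx1.le) (min_eq_left hx2.le)
    (by simpa [D.end_left b d (hbc.trans hcd)] using h1)
    (by simpa [D.end_right a c (hab.trans hbc)] using h2)]
  rw [D.end_left b d (hbc.trans hcd), D.end_right a c (hab.trans hbc)]
  rcases lt_or_gt_of_ne h1 with h1 | h1 <;> rcases lt_or_gt_of_ne h2 with h2 | h2 <;>
    simp [sig, mul_pos_iff, h1, h2, not_lt_of_gt]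

theorem odd_crossCount_nested (hab : a < b) (hbc : b < c) (hcd : c < d) :
    Odd (D.crossCount a d b c) ↔ D.sig a b d ≠ D.sig a c d := by
  have h1 := D.avoid_vertex a b d hab (hbc.trans hcd)
  have h2 := D.avoid_vertex a c d (hab.trans hbc) hcd
  have hx1 := D.x_strictMono hab
  have hx2 := D.x_strictMono hcd
  rw [D.odd_crossCount_iff (b := b) (c := c) (hab.trans (hbc.trans hcd)) hbc
    (by simp [hab.ne]) hbc (max_eq_right hx1.le) (min_eq_right hx2.le)
    (by simpa [D.end_left b c hbc] using h1)
    (by simpa [D.end_right b c hbc] using h2)]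
  rw [D.end_left b c hbc, D.end_right b c hbc]
  rcases lt_or_gt_of_ne h1 with h1 | h1 <;> rcases lt_or_gt_of_ne h2 with h2 | h2 <;>
    simp [sig, mul_neg_iff, h1, h2, not_lt_of_gt]

/-- In a semisimple drawing, if the edge `ad` separates `b` from `c` then `ac` and `bd` lie on the
corresponding sides of `b` and `c`. -/
theorem Semisimple.sig_of_ne (hD : D.Semisimple) (hab : a < b) (hbc : b < c) (hcd : c < d)
    (h : D.sig a b d ≠ D.sig a c d) :
    D.sig a b c = D.sig a b d ∧ D.sig b c d = D.sig a c d := by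
  have hac := hab.trans hbc
  have hbd := hbc.trans hcd
  have had := hab.trans hbd
  have hxab := D.x_strictMono hab
  have hxbc := D.x_strictMono hbc
  have hxcd := D.x_strictMono hcd
  have hb := D.avoid_vertex a b d hab hbd
  have hc := D.avoid_vertex a c d hac hcd
  have hp := D.avoid_vertex a b c hab hbc
  have hs := D.avoid_vertex b c d hbc hcd
  have hadc := D.cont a d had
  have hne1 : (a, c) ≠ (a, d) := by simp [hcd.ne]
  have hne2 : (a, d) ≠ (b, d) := by simp [hab.ne]
  have e1 : D.crossSet a c a d = ∅ := (Set.ncard_eq_zero (D.cross_finite a c a d hac had hne1)).mp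
    (hD a c a d hac had hne1 (Or.inl rfl))
  have e2 : D.crossSet a d b d = ∅ := (Set.ncard_eq_zero (D.cross_finite a d b d had hbd hne2)).mp
    (hD a d b d had hbd hne2 (Or.inr (Or.inr (Or.inr rfl))))
  have k1 : 0 < (D.e a c (D.x b) - D.e a d (D.x b)) * (D.e a c (D.x c) - D.e a d (D.x c)) := by
    refine mul_pos_of_continuousOn_of_ne_zero (f := fun t => D.e a c t - D.e a d t) hxbc.le
      (((D.cont a c hac).mono (Set.Icc_subset_Icc hxab.le le_rfl)).sub
        (hadc.mono (Set.Icc_subset_Icc hxab.le hxcd.le))) fun t ht h0 => ?_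
    rcases ht.2.eq_or_lt with rfl | h2
    · simp [D.end_right a c hac, hc] at h0
    · exact e1.subset (show t ∈ D.crossSet a c a d from
        ⟨max_lt (by linarith [ht.1]) (by linarith [ht.1]), lt_min h2 (by linarith),
          sub_eq_zero.mp h0⟩)
  have k2 : 0 < (D.e a d (D.x b) - D.e b d (D.x b)) * (D.e a d (D.x c) - D.e b d (D.x c)) := by
    refine mul_pos_of_continuousOn_of_ne_zero (f := fun t => D.e a d t - D.e b d t) hxbc.le
      ((hadc.mono (Set.Icc_subset_Icc hxab.le hxcd.le)).sub
        ((D.cont b d hbd).mono (Set.Icc_subset_Icc le_rfl hxcd.le))) fun t ht h0 => ?_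
    rcases ht.1.eq_or_lt with rfl | h1
    · simp [D.end_left b d hbd, hb] at h0
    · exact e2.subset (show t ∈ D.crossSet a d b d from
        ⟨max_lt (by linarith) h1, lt_min (by linarith [ht.2]) (by linarith [ht.2]),
          sub_eq_zero.mp h0⟩)
  rw [D.end_right a c hac] at k1
  rw [D.end_left b d hbd] at k2
  rcases lt_or_gt_of_ne hb with hb | hb <;> rcases lt_or_gt_of_ne hc with hc | hc <;>
    rcases lt_or_gt_of_ne hp with hp | hp <;> rcases lt_or_gt_of_ne hs with hs | hs <;>
    simp [sig, hb, hc, hp, hs, not_lt_of_gt] at h ⊢ <;> nlinarith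

end Quadruple

end XMonotoneDrawing

namespace Sig

variable {n : ℕ} (σ : Fin n → Fin n → Fin n → Bool) {i j m : Fin n}

theorem leftOf_of_gt (h1 : i < j) (h2 : j < m) : LeftOf σ i j m ↔ σ i j m = true := by
  simp [LeftOf, h2, h2.not_gt, (h1.trans h2).not_gt]

theorem leftOf_of_lt (h1 : m < i) (h2 : i < j) : LeftOf σ i j m ↔ σ m i j = true := by
  simp [LeftOf, h1, h1.not_gt, (h1.trans h2).not_gt]

theorem leftOf_of_between (h1 : i < m) (h2 : m < j) : LeftOf σ i j m ↔ σ i m j = false := by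
  simp [LeftOf, h1, h2, h1.not_gt, h2.not_gt]

theorem not_leftOf_left (h : i < j) : ¬ LeftOf σ i j i := by
  simp [LeftOf, h.not_gt]

theorem not_leftOf_right (h : i < j) : ¬ LeftOf σ i j j := by
  simp [LeftOf, h.not_gt]

open Classical in
/-- `1` if `k` and `l` are on different sides of the edge `{i, j}`, and `0` otherwise. -/
noncomputable def sepInd (i j k l : Fin n) : ℕ :=
  if LeftOf σ i j k ↔ LeftOf σ i j l then 0 else 1

/-- `1` if the edges `{i, j}` and `{k, l}` cross an odd number of times, and `0` otherwise. -/
noncomputable def oddInd (D : XMonotoneDrawing n) (i j k l : Fin n) : ℕ :=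
  if Odd (D.crossCount i j k l) then 1 else 0

theorem oddInd_comm (D : XMonotoneDrawing n) (i j k l : Fin n) :
    oddInd D i j k l = oddInd D k l i j := by
  simp only [oddInd, D.crossCount_comm i j k l]

theorem oddInd_of_lt (D : XMonotoneDrawing n) {i j k l : Fin n} (h : j < k) :
    oddInd D i j k l = 0 :=
  if_neg (XMonotoneDrawing.not_odd_crossCount_of_lt h)

/-- In a semisimple drawing, for every 4-tuple of vertices the number of pairs of edges crossing
oddly and the number of edges separating the two remaining vertices add up to three. -/
theorem oddInd_add_sepInd {D : XMonotoneDrawing n} (hD : D.Semisimple) {a b c d : Fin n}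
    (hab : a < b) (hbc : b < c) (hcd : c < d) :
    (oddInd D a c b d + oddInd D a d b c) +
    (sepInd D.sig a b c d + sepInd D.sig a c b d + sepInd D.sig a d b c +
      sepInd D.sig b c a d + sepInd D.sig b d a c + sepInd D.sig c d a b) = 3 := by
  have hac := hab.trans hbc
  have hbd := hbc.trans hcd
  simp only [oddInd, sepInd, XMonotoneDrawing.odd_crossCount_interlaced hab hbc hcd,
    XMonotoneDrawing.odd_crossCount_nested hab hbc hcd,
    leftOf_of_gt _ hab hbc, leftOf_of_gt _ hab hbd, leftOf_of_between _ hab hbc,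
    leftOf_of_gt _ hac hcd, leftOf_of_between _ hab hbd, leftOf_of_between _ hac hcd,
    leftOf_of_lt _ hab hbc, leftOf_of_gt _ hbc hcd, leftOf_of_lt _ hab hbd,
    leftOf_of_between _ hbc hcd, leftOf_of_lt _ hac hcd, leftOf_of_lt _ hbc hcd]
  have h := hD.sig_of_ne hab hbc hcd
  revert h
  generalize D.sig a b c = p
  generalize D.sig a b d = q
  generalize D.sig a c d = r
  generalize D.sig b c d = s
  cases p <;> cases q <;> cases r <;> cases s <;> simp

theorem ocr_eq_sum {D : XMonotoneDrawing n} (hD : D.Semisimple) :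
    D.ocr = ∑ a, ∑ b, ∑ c, ∑ d, if a < b ∧ b < c ∧ c < d then
      oddInd D a c b d + oddInd D a d b c else 0 := by
  classical
  have hcard : {p : (Fin n × Fin n) × (Fin n × Fin n) |
      p.1.1 < p.1.2 ∧ p.2.1 < p.2.2 ∧ p.1 ≠ p.2 ∧
        Odd (D.crossCount p.1.1 p.1.2 p.2.1 p.2.2)}.ncard =
      ∑ i, ∑ j, ∑ k, ∑ l, if DisjointPairs i j k l then oddInd D i j k l else 0 := by
    rw [Set.ncard_eq_toFinset_card', Set.toFinset_ofPred, Finset.card_filter]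
    simp only [Fintype.sum_prod_type]
    refine Finset.sum_congr rfl fun i _ => Finset.sum_congr rfl fun j _ =>
      Finset.sum_congr rfl fun k _ => Finset.sum_congr rfl fun l _ => ?_
    rw [oddInd, ← ite_and]
    refine if_congr ?_ rfl rfl
    constructor
    · rintro ⟨hij, hkl, hne, hodd⟩
      refine ⟨⟨hij, hkl, ?_⟩, hodd⟩
      by_contra hadj
      have hA : XMonotoneDrawing.Adj i j k l := by
        unfold XMonotoneDrawing.Adj
        tauto
      simp [hD i j k l hij hkl hne hA] at hodd
    · rintro ⟨⟨hij, hkl, h, _⟩, hodd⟩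
      exact ⟨hij, hkl, by simp [h], hodd⟩
  rw [XMonotoneDrawing.ocr, hcard, sum_disjointPairs]
  refine Nat.div_eq_of_eq_mul_right two_pos ?_
  simp only [Finset.mul_sum]
  refine Finset.sum_congr rfl fun a _ => Finset.sum_congr rfl fun b _ =>
    Finset.sum_congr rfl fun c _ => Finset.sum_congr rfl fun d _ => ?_
  split_ifs with h
  · rw [oddInd_of_lt D h.2.1, oddInd_comm D b c, oddInd_comm D b d, oddInd_comm D c d,
      oddInd_of_lt D h.2.1]
    ring
  · rfl

theorem ocr_add_separations {D : XMonotoneDrawing n} (hD : D.Semisimple) :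
    2 * D.ocr + 2 * ∑ i, ∑ j, ∑ k, ∑ l,
        (if DisjointPairs i j k l then sepInd D.sig i j k l else 0) =
      ∑ i : Fin n, ∑ j, ∑ k, ∑ l, if DisjointPairs i j k l then 1 else 0 := by
  rw [ocr_eq_sum hD, sum_disjointPairs, sum_disjointPairs (fun _ _ _ _ => 1)]
  simp only [Finset.mul_sum, ← Finset.sum_add_distrib]
  refine Finset.sum_congr rfl fun a _ => Finset.sum_congr rfl fun b _ =>
    Finset.sum_congr rfl fun c _ => Finset.sum_congr rfl fun d _ => ?_
  split_ifs with h
  · have := oddInd_add_sepInd hD h.1 h.2.1 h.2.2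
    omega
  · rfl

theorem sum_ne_indicator (S : Finset (Fin n)) :
    ∑ k, ∑ l, (if k ≠ l then (if k ∈ S then (1 : ℚ) else 0) * (if l ∈ S then 1 else 0) else 0) =
      S.card * (S.card - 1) := by
  have h : ∀ k l : Fin n, (if k ≠ l then (if k ∈ S then (1 : ℚ) else 0) *
      (if l ∈ S then 1 else 0) else 0) = (if k ∈ S then (1 : ℚ) else 0) *
      (if l ∈ S then 1 else 0) - if k = l then (if k ∈ S then (1 : ℚ) else 0) else 0 := by
    intro k l
    by_cases hkl : k = l
    · subst hkl
      by_cases hk : k ∈ S <;> simp [hk]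
    · simp [hkl]
  simp only [h, Finset.sum_sub_distrib, ← Finset.sum_mul_sum]
  simp
  ring

theorem sum_lt_one : ∑ i : Fin n, ∑ j, (if i < j then (1 : ℚ) else 0) = n.choose 2 := by
  have h1 := two_mul_sum_lt (n := n) (fun _ _ => 1) fun _ _ => rfl
  have h2 := sum_ne_indicator (Finset.univ : Finset (Fin n))
  simp only [Finset.mem_univ, if_true, mul_one, Finset.card_univ, Fintype.card_fin] at h2
  rw [Nat.cast_choose_two]
  linarith

theorem card_compl_pair (h : i < j) : (({i, j}ᶜ : Finset (Fin n)).card : ℚ) = n - 2 := by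
  have h2 : ({i, j} : Finset (Fin n)).card = 2 := Finset.card_pair h.ne
  have := Finset.card_add_card_compl ({i, j} : Finset (Fin n))
  rw [h2, Fintype.card_fin] at this
  have hcast := congrArg (Nat.cast : ℕ → ℚ) this
  push_cast at hcast
  linarith

theorem disjointPairs_iff {k l : Fin n} (h : i < j) : DisjointPairs i j k l ↔
    k < l ∧ k ∈ ({i, j}ᶜ : Finset (Fin n)) ∧ l ∈ ({i, j}ᶜ : Finset (Fin n)) := by
  simp only [DisjointPairs, Finset.mem_compl, Finset.mem_insert, Finset.mem_singleton]
  omega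

theorem sum_disjointPairs_one (h : i < j) :
    2 * ∑ k, ∑ l, (if DisjointPairs i j k l then (1 : ℚ) else 0) = (n - 2) * (n - 3) := by
  have h1 := two_mul_sum_lt (fun k l => (if k ∈ ({i, j}ᶜ : Finset (Fin n)) then (1 : ℚ) else 0) *
    (if l ∈ ({i, j}ᶜ : Finset (Fin n)) then 1 else 0)) fun k l => mul_comm _ _
  rw [sum_ne_indicator, card_compl_pair h] at h1
  simp only [disjointPairs_iff h, ite_and]
  simp only [ite_mul, one_mul, zero_mul] at h1
  rw [h1]
  ring

theorem LeftOf.mem_compl_pair {σ : Fin n → Fin n → Fin n → Bool} (h : i < j)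
    (hm : LeftOf σ i j m) : m ∈ ({i, j}ᶜ : Finset (Fin n)) := by
  simp only [Finset.mem_compl, Finset.mem_insert, Finset.mem_singleton]
  rintro (rfl | rfl)
  · exact not_leftOf_left σ h hm
  · exact not_leftOf_right σ h hm

theorem leftCount_add_two_le (h : i < j) : leftCount σ i j + 2 ≤ n := by
  have hle : leftCount σ i j ≤ ({i, j}ᶜ : Finset (Fin n)).card := by
    rw [← Set.ncard_coe_finset]
    exact Set.ncard_le_ncard fun m hm => LeftOf.mem_compl_pair h hm
  have hle' : (leftCount σ i j : ℚ) ≤ ({i, j}ᶜ : Finset (Fin n)).card := by exact_mod_cast hle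
  rw [card_compl_pair h] at hle'
  have : (leftCount σ i j : ℚ) + 2 ≤ n := by linarith
  exact_mod_cast this

theorem sum_disjointPairs_sepInd (h : i < j) :
    ∑ k, ∑ l, (if DisjointPairs i j k l then (sepInd σ i j k l : ℚ) else 0) =
      leftCount σ i j * (n - 2 - leftCount σ i j) := by
  classical
  set L : Finset (Fin n) := Finset.univ.filter (LeftOf σ i j) with hL
  set R : Finset (Fin n) := {i, j}ᶜ \ L with hR
  have hLs : L ⊆ {i, j}ᶜ := by
    intro m hm
    simp only [hL, Finset.mem_filter, Finset.mem_univ, true_and] at hm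
    exact hm.mem_compl_pair h
  have hcL : leftCount σ i j = L.card := by
    rw [leftCount, Set.ncard_eq_toFinset_card', Set.toFinset_ofPred]
  have hcR : (R.card : ℚ) = n - 2 - L.card := by
    rw [hR, Finset.card_sdiff_of_subset hLs, Nat.cast_sub (Finset.card_le_card hLs),
      card_compl_pair h]
  let g : Fin n → Fin n → ℚ := fun k l =>
    (if k ∈ L then 1 else 0) * (if l ∈ R then 1 else 0) +
      (if k ∈ R then 1 else 0) * (if l ∈ L then 1 else 0)
  have hg : ∀ k l, (if DisjointPairs i j k l then (sepInd σ i j k l : ℚ) else 0) =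
      if k < l then g k l else 0 := by
    intro k l
    have hk : k ∈ L → k ∈ ({i, j}ᶜ : Finset (Fin n)) := fun h => hLs h
    have hl : l ∈ L → l ∈ ({i, j}ᶜ : Finset (Fin n)) := fun h => hLs h
    have hkL : LeftOf σ i j k ↔ k ∈ L := by simp [hL]
    have hlL : LeftOf σ i j l ↔ l ∈ L := by simp [hL]
    simp only [disjointPairs_iff h, g, hR, Finset.mem_sdiff, sepInd, hkL, hlL]
    generalize ({i, j}ᶜ : Finset (Fin n)) = S at hk hl ⊢
    by_cases h1 : k < l <;> by_cases h2 : k ∈ L <;> by_cases h3 : l ∈ L <;>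
      by_cases h4 : k ∈ S <;> by_cases h5 : l ∈ S <;>
      first
        | exact absurd (hk h2) h4
        | exact absurd (hl h3) h5
        | simp [h1, h2, h3, h4, h5]
  have h0 : ∀ k l, (if k ≠ l then g k l else 0) = g k l := by
    intro k l
    split_ifs with hkl
    · rfl
    · push Not at hkl
      subst hkl
      by_cases hk : k ∈ L <;> simp [g, hR, hk]
  have h1 := two_mul_sum_lt g fun k l => by
    simp only [g]
    ring
  simp only [h0] at h1
  have h2 : ∑ k, ∑ l, g k l = L.card * R.card + R.card * L.card := by
    simp only [g, Finset.sum_add_distrib, ← Finset.sum_mul_sum]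
    simp
  simp only [hg, hcL, ← hcR]
  linarith

/-- The number `k` for which `{i, j}` is a `k`-edge. -/
noncomputable def edgeLevel (i j : Fin n) : ℕ :=
  min (leftCount σ i j) (n - 2 - leftCount σ i j)

theorem Ek_eq_sum (k : ℕ) :
    Ek σ k = ∑ i, ∑ j, if i < j then (if edgeLevel σ i j = k then 1 else 0) else 0 := by
  classical
  rw [Ek, Set.ncard_eq_toFinset_card', Set.toFinset_ofPred, Finset.card_filter]
  simp only [Fintype.sum_prod_type]
  refine Finset.sum_congr rfl fun i _ => Finset.sum_congr rfl fun j _ => ?_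
  rw [← ite_and]
  exact if_congr Iff.rfl rfl rfl

theorem Ele_eq_sum (k : ℕ) :
    Ele σ k = ∑ i, ∑ j, if i < j then (if edgeLevel σ i j ≤ k then 1 else 0) else 0 := by
  simp only [Ele, Ek_eq_sum]
  rw [Finset.sum_comm]
  refine Finset.sum_congr rfl fun i _ => ?_
  rw [Finset.sum_comm]
  refine Finset.sum_congr rfl fun j _ => ?_
  split_ifs <;> simp <;> omega

theorem sum_range_ite_le (m K : ℕ) :
    ∑ k ∈ Finset.range K, (if m ≤ k then 1 else 0) = K - m := by
  induction K with
  | zero => simp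
  | succ K ih =>
    rw [Finset.sum_range_succ, ih]
    split_ifs <;> omega

theorem Elele_eq_sum (K : ℕ) :
    Elele σ K = ∑ i, ∑ j, if i < j then K + 1 - edgeLevel σ i j else 0 := by
  simp only [Elele, Ele_eq_sum]
  rw [Finset.sum_comm]
  refine Finset.sum_congr rfl fun i _ => ?_
  rw [Finset.sum_comm]
  refine Finset.sum_congr rfl fun j _ => ?_
  split_ifs
  · exact sum_range_ite_le _ _
  · simp

theorem ElelZ_eq_sum :
    ElelZ σ (((n / 2 : ℕ) : ℤ) - 2) =
      ∑ i, ∑ j, if i < j then n / 2 - 1 - edgeLevel σ i j else 0 := by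
  rw [ElelZ]
  split_ifs with h
  · rw [Elele_eq_sum]
    have : (((n / 2 : ℕ) : ℤ) - 2).toNat + 1 = n / 2 - 1 := by omega
    rw [this]
  · have : n / 2 - 1 = 0 := by omega
    simp [this]

theorem two_mul_sum_range_sub (m K : ℕ) :
    2 * ∑ k ∈ Finset.range K, (k + 1 - m) = (K - m) * (K - m + 1) := by
  induction K with
  | zero => simp
  | succ K ih =>
    rw [Finset.sum_range_succ, mul_add, ih]
    rcases le_or_gt m K with h | h
    · obtain ⟨r, rfl⟩ := Nat.exists_eq_add_of_le h
      simp only [Nat.add_sub_cancel_left, Nat.add_assoc]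
      ring
    · simp [Nat.sub_eq_zero_of_le h.le, Nat.sub_eq_zero_of_le (Nat.succ_le_of_lt h)]

theorem two_mul_sum_Elele (K : ℕ) :
    2 * ∑ k ∈ Finset.range K, Elele σ k = ∑ i, ∑ j, if i < j then
      (K - edgeLevel σ i j) * (K - edgeLevel σ i j + 1) else 0 := by
  simp only [Elele_eq_sum]
  rw [Finset.sum_comm, Finset.mul_sum]
  refine Finset.sum_congr rfl fun i _ => ?_
  rw [Finset.sum_comm, Finset.mul_sum]
  refine Finset.sum_congr rfl fun j _ => ?_
  split_ifs
  · exact two_mul_sum_range_sub _ _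
  · simp

/-- The contribution of a single edge to the two sides of the crossing formula. -/
theorem edge_contribution (h : i < j) :
    (n - 2 : ℚ) * (n - 3) / 4 - leftCount σ i j * (n - 2 - leftCount σ i j) =
      (((n / 2 - 1 - edgeLevel σ i j) * (n / 2 - 1 - edgeLevel σ i j + 1) : ℕ) : ℚ) -
        (1 / 2 : ℚ) * (((n - 2) / 2 : ℕ) : ℚ) -
        (1 / 2 : ℚ) * (1 + (-1 : ℚ) ^ n) * ((n / 2 - 1 - edgeLevel σ i j : ℕ) : ℚ) := by
  have hl := leftCount_add_two_le σ h
  have hM : n / 2 - 1 = (n - 2) / 2 := by omega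
  have hk : edgeLevel σ i j ≤ (n - 2) / 2 := by
    unfold edgeLevel
    omega
  have hprod : (leftCount σ i j : ℚ) * (n - 2 - leftCount σ i j) =
      edgeLevel σ i j * (n - 2 - edgeLevel σ i j) := by
    have hcast : ((n - 2 - leftCount σ i j : ℕ) : ℚ) = n - 2 - leftCount σ i j := by
      rw [Nat.cast_sub (by omega), Nat.cast_sub (by omega)]
      norm_num
    unfold edgeLevel
    rcases min_choice (leftCount σ i j) (n - 2 - leftCount σ i j) with h | h
    · rw [h]
    · rw [h, hcast]
      ring
  rw [hprod, hM]
  generalize edgeLevel σ i j = k at hk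
  push_cast [Nat.cast_sub hk]
  generalize hq : (n - 2) / 2 = q
  rcases Nat.even_or_odd n with he | ho
  · have hn : n = 2 * q + 2 := by
      obtain ⟨r, hr⟩ := he
      omega
    have hnq : (n : ℚ) = 2 * q + 2 := by exact_mod_cast hn
    rw [he.neg_one_pow, hnq]
    ring
  · have hn : n = 2 * q + 3 := by
      obtain ⟨r, hr⟩ := ho
      omega
    have hnq : (n : ℚ) = 2 * q + 3 := by exact_mod_cast hn
    rw [ho.neg_one_pow, hnq]
    ring

theorem sum_disjointPairs_eq_sum_lt (f : Fin n → Fin n → Fin n → Fin n → ℚ) :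
    ∑ i, ∑ j, ∑ k, ∑ l, (if DisjointPairs i j k l then f i j k l else 0) =
      ∑ i, ∑ j, if i < j then
        ∑ k, ∑ l, (if DisjointPairs i j k l then f i j k l else 0) else 0 := by
  refine Finset.sum_congr rfl fun i _ => Finset.sum_congr rfl fun j _ => ?_
  split_ifs with h
  · rfl
  · exact Finset.sum_eq_zero fun k _ => Finset.sum_eq_zero fun l _ => if_neg fun hd => h hd.1

theorem ocr_eq_sum_edges {D : XMonotoneDrawing n} (hD : D.Semisimple) :
    (D.ocr : ℚ) = ∑ i, ∑ j, if i < j then ((n - 2 : ℚ) * (n - 3) / 4 -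
      leftCount D.sig i j * (n - 2 - leftCount D.sig i j)) else 0 := by
  have h := congrArg (Nat.cast : ℕ → ℚ) (ocr_add_separations hD)
  push_cast at h
  rw [sum_disjointPairs_eq_sum_lt (fun i j k l => (sepInd D.sig i j k l : ℚ)),
    sum_disjointPairs_eq_sum_lt (fun _ _ _ _ => 1)] at h
  have h' : (D.ocr : ℚ) = (1 / 2) * (∑ i : Fin n, ∑ j, if i < j then
        ∑ k, ∑ l, (if DisjointPairs i j k l then (1 : ℚ) else 0) else 0) -
      ∑ i, ∑ j, if i < j then
        ∑ k, ∑ l, (if DisjointPairs i j k l then (sepInd D.sig i j k l : ℚ) else 0) else 0 := by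
    linarith
  rw [h']
  simp only [Finset.mul_sum (s := Finset.univ (α := Fin n)), ← Finset.sum_sub_distrib]
  refine Finset.sum_congr rfl fun i _ => Finset.sum_congr rfl fun j _ => ?_
  split_ifs with hij
  · rw [sum_disjointPairs_sepInd _ hij]
    have := sum_disjointPairs_one hij
    linarith
  · simp

end Sig

/-- For every semisimple x-monotone drawing `D` of `K n`,
`ocr(D) = 2·Σ_{k=0}^{⌊n/2⌋−2} E_{≤≤k}(D) − (1/2)·C(n,2)·⌊(n−2)/2⌋
  − (1/2)(1+(−1)^n)·E_{≤≤⌊n/2⌋−2}(D)`. -/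
theorem semisimple_monotone_ocr_formula (n : ℕ) (D : XMonotoneDrawing n)
    (hD : D.Semisimple) :
    (D.ocr : ℚ) =
      2 * ∑ k ∈ Finset.range (n / 2 - 1), (Sig.Elele D.sig k : ℚ) -
        (1 / 2 : ℚ) * (n.choose 2 : ℚ) * (((n - 2) / 2 : ℕ) : ℚ) -
        (1 / 2 : ℚ) * (1 + (-1 : ℚ) ^ n) *
          (Sig.ElelZ D.sig (((n / 2 : ℕ) : ℤ) - 2) : ℚ) := by
  have h1 := congrArg (Nat.cast : ℕ → ℚ) (Sig.two_mul_sum_Elele D.sig (n / 2 - 1))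
  have h2 := congrArg (Nat.cast : ℕ → ℚ) (Sig.ElelZ_eq_sum D.sig)
  rw [Nat.cast_mul, Nat.cast_sum, Nat.cast_ofNat] at h1
  rw [h1, h2, Sig.ocr_eq_sum_edges hD, ← Sig.sum_lt_one, mul_right_comm]
  simp only [Nat.cast_sum, Finset.mul_sum, ← Finset.sum_sub_distrib]
  refine Finset.sum_congr rfl fun i _ => Finset.sum_congr rfl fun j _ => ?_
  split_ifs with hij
  · rw [Sig.edge_contribution D.sig hij]
    ring
  · simp
end
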